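/- arXiv:2105.01449 — 2 statements merged into one kernel-verified Lean document; each statement's English description precedes it below -/
import Mathlib

section
/- (Markov's theorem) L ∩ [√5, 3) = M ∩ [√5, 3) = {√(9 − 4/z²) : z a Markov number}. -/
open scoped ENNReal

/-- The distance from a real number to the nearest integer. -/
noncomputable def distNearestInt (x : ℝ) : ℝ := |x - round x|

/-- The best constant of Diophantine approximation of `α`,
`ℓ(α) = limsup_{q → ∞} 1 / (q ⬝ ‖q α‖) ∈ [0, ∞]`. -/
noncomputable def lagrangeVal (α : ℝ) : ℝ≥0∞ :=
  Filter.limsup (fun q : ℕ => ENNReal.ofReal (1 / (q * distNearestInt (q * α)))) Filter.atTop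

/-- The Lagrange spectrum: the set of finite values `ℓ(α)` over irrational `α`. -/
def LagrangeSpectrum : Set ℝ :=
  {t | ∃ α : ℝ, Irrational α ∧ lagrangeVal α ≠ ⊤ ∧ (lagrangeVal α).toReal = t}

/-- The best constant of Diophantine approximation of the binary quadratic form
`h(x,y) = a x² + b x y + c y²`, namely `m(h) = sup_{(p,q) ≠ (0,0)} √Δ(h) / |h(p,q)| ∈ (0, ∞]`. -/
noncomputable def markovVal (a b c : ℝ) : ℝ≥0∞ :=
  ⨆ (pq : ℤ × ℤ) (_ : pq ≠ (0, 0)),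
    ENNReal.ofReal (Real.sqrt (b ^ 2 - 4 * a * c)) /
      ENNReal.ofReal |a * (pq.1 : ℝ) ^ 2 + b * pq.1 * pq.2 + c * (pq.2 : ℝ) ^ 2|

/-- The Markov spectrum: the set of finite values `m(h)` over real indefinite binary
quadratic forms `h` with positive discriminant. -/
def MarkovSpectrum : Set ℝ :=
  {t | ∃ a b c : ℝ, 0 < b ^ 2 - 4 * a * c ∧ markovVal a b c ≠ ⊤ ∧ (markovVal a b c).toReal = t}

/-- A Markov triple: a triple of positive integers with `x² + y² + z² = 3xyz`. -/
def IsMarkovTriple (x y z : ℕ) : Prop :=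
  0 < x ∧ 0 < y ∧ 0 < z ∧ x ^ 2 + y ^ 2 + z ^ 2 = 3 * x * y * z

/-- A Markov number: the largest coordinate of some Markov triple. -/
def IsMarkovNumber (z : ℕ) : Prop :=
  ∃ x y : ℕ, IsMarkovTriple x y z ∧ x ≤ z ∧ y ≤ z

/-!
Both spectra are read off from the forms `(p - θ * q) * (p - φ * q)` whose values at nonzero integer
vectors have absolute value at least `1`. An element `t` of either spectrum is the gap `φ - θ` of
such a form: take coordinates in which a nearly minimal vector becomes `(1, 0)` and pass to a limit.

Let `2 ≤ φ - θ < 3`. Attach to the Markov triples fractions `a/x < c/m < b/y` and walk up the tree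
of triples, keeping `a/x` in `(θ, φ)` and `b/y` in `(θ + 3, φ + 3)`. The values of the form at these
two fractions bound `m` by `1 / (3 - (φ - θ))`, so the walk ends, which means that `c/m` lies
between `φ` and `θ + 3`. There the values at `a/x`, `b/y` and `c/m` leave no room: they force
`(φ - θ) ^ 2 = 9 - 4 / m ^ 2`.

Conversely, Markov's form of the fraction `c/m` has this gap. On three cones of vectors it is
bounded below by a descent through smaller Markov triples, and half-turns that change the sign of
the form move the other vectors to vectors with smaller second coordinate. Its minimum is attained
infinitely often, because the Pell-type equation `u² - 3muv + v² = 1` has infinitely many solutions.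
-/

/-! ### Markov triples -/

/-- A Markov triple of integers whose first two entries, and hence any two entries, are coprime.
The entries are not ordered: the descent in `sq_le_of_dvd` permutes them cyclically. -/
structure IsCoprimeMarkovTriple (x y z : ℤ) : Prop where
  pos₁ : 0 < x
  pos₂ : 0 < y
  pos₃ : 0 < z
  coprime : IsCoprime x y
  eq : x ^ 2 + y ^ 2 + z ^ 2 = 3 * x * y * z

namespace IsCoprimeMarkovTriple

variable {x y z S T k : ℤ}

theorem swap (h : IsCoprimeMarkovTriple x y z) : IsCoprimeMarkovTriple y x z :=
  ⟨h.pos₂, h.pos₁, h.pos₃, h.coprime.symm, by linear_combination h.eq⟩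

theorem rotate (h : IsCoprimeMarkovTriple x y z) : IsCoprimeMarkovTriple y z x := by
  refine ⟨h.pos₂, h.pos₃, h.pos₁, ?_, by linear_combination h.eq⟩
  have hcop : IsCoprime y (x ^ 2 + y * y) := h.coprime.symm.pow_right.add_mul_left_right y
  rw [show x ^ 2 + y * y = z * (3 * x * y - z) by linear_combination h.eq] at hcop
  exact hcop.of_mul_right_left

theorem dvd_of_mul_sub_mul_eq (h : IsCoprimeMarkovTriple x y z) (hk : x * T - y * S = z * k) :
    x ∣ y * k - z * S := by
  have hdvd : x ∣ z * (y * k - z * S) :=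
    ⟨y * T - (3 * y * z - x) * S, by linear_combination -y * hk - S * h.eq⟩
  exact h.rotate.rotate.coprime.symm.dvd_of_dvd_mul_left hdvd

theorem sq_le_of_sq_le (h : IsCoprimeMarkovTriple x y z) (hS : 0 ≤ S) (hk0 : 0 ≤ k)
    (hk : x * T - y * S = z * k) (hle : x ^ 2 ≤ S ^ 2 + k ^ 2 + 3 * x * S * k) :
    z ^ 2 ≤ S ^ 2 + T ^ 2 + 3 * z * S * T := by
  have hy := h.pos₂
  have hz := h.pos₃
  refine le_of_mul_le_mul_left ?_ (pow_pos h.pos₁ 2)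
  calc x ^ 2 * z ^ 2 ≤ z ^ 2 * (S ^ 2 + k ^ 2 + 3 * x * S * k) := by
        rw [mul_comm]; exact mul_le_mul_of_nonneg_left hle (sq_nonneg z)
    _ ≤ z ^ 2 * (S ^ 2 + k ^ 2 + 3 * x * S * k) +
          (2 * (x ^ 2 + y ^ 2) * S ^ 2 + 2 * z * y * k * S) :=
        le_add_of_nonneg_right (by positivity)
    _ = x ^ 2 * (S ^ 2 + T ^ 2 + 3 * z * S * T) := by
        linear_combination -(x * T + y * S + z * k + 3 * x * z * S) * hk + S ^ 2 * h.eq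

/-- If `a` and `b` are lattice vectors of determinant `z`, the lattice points of the cone they span
are the `(S a + T b) / z` subject to the divisibility condition. The vector `(x a + y b) / z` cuts
the cone into two cones of the same kind, of determinants `y` and `x`; this drives the descent. -/
theorem sq_le_of_dvd (h : IsCoprimeMarkovTriple x y z) (hS : 0 ≤ S) (hT : 0 ≤ T)
    (hne : S ≠ 0 ∨ T ≠ 0) (hdvd : z ∣ x * T - y * S) :
    z ^ 2 ≤ S ^ 2 + T ^ 2 + 3 * z * S * T := by
  induction hn : (x * y * S * T).toNat using Nat.strong_induction_on generalizing x y z S T with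
  | _ n ih =>
    obtain ⟨k, hk⟩ := hdvd
    wlog hk0 : 0 ≤ k generalizing x y S T k
    · have := this h.swap hT hS hne.symm (by rw [← hn]; ring_nf) (-k)
        (by linear_combination -hk) (by omega)
      linarith
    have hy := h.pos₂
    rcases hS.eq_or_lt with rfl | hSpos
    · have hTpos : 0 < T := by omega
      have hzT : z ∣ T := h.rotate.rotate.coprime.dvd_of_dvd_mul_left ⟨k, by linarith⟩
      nlinarith [Int.le_of_dvd hTpos hzT, h.pos₃]
    · refine h.sq_le_of_sq_le hS hk0 hk (ih _ ?_ h.rotate hS hk0 (Or.inl hSpos.ne')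
        (h.dvd_of_mul_sub_mul_eq hk) rfl)
      have hprod : y * z * S * k = x * y * S * T - y ^ 2 * S ^ 2 := by
        linear_combination -(y * S) * hk
      have : 0 < y ^ 2 * S ^ 2 := by positivity
      have : 0 ≤ y * z * S * k := by have := h.pos₃; positivity
      omega

end IsCoprimeMarkovTriple

/-- Fractions `a/x < c/m < b/y` whose denominators form a Markov triple with largest entry `m` and
whose neighbours have the numbers `y` and `x` as determinants. The fractions of a fan are
consecutive vertices in the tree of Markov triples. -/
structure MarkovFan (a x b y c m : ℤ) : Prop extends IsCoprimeMarkovTriple x y m where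
  left_le : x ≤ m
  right_le : y ≤ m
  det_left : c * x - a * m = y
  det_right : b * m - c * y = x

namespace MarkovFan

variable {a x b y c m : ℤ}

theorem root : MarkovFan (-1) 1 1 1 0 1 where
  pos₁ := one_pos
  pos₂ := one_pos
  pos₃ := one_pos
  coprime := isCoprime_one_left
  eq := by norm_num
  left_le := le_rfl
  right_le := le_rfl
  det_left := by norm_num
  det_right := by norm_num

theorem mirror (h : MarkovFan a x b y c m) : MarkovFan (-b) y (-a) x (-c) m where
  toIsCoprimeMarkovTriple := h.swap
  left_le := h.right_le
  right_le := h.left_le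
  det_left := by linear_combination h.det_right
  det_right := by linear_combination h.det_left

theorem det_outer (h : MarkovFan a x b y c m) : b * x - a * y = 3 * x * y - m := by
  apply mul_left_cancel₀ h.pos₃.ne'
  linear_combination x * h.det_right + y * h.det_left + h.eq

theorem lt_left (h : MarkovFan a x b y c m) : m < 3 * x * m - y := by
  nlinarith [h.pos₁, h.pos₃, h.right_le]

theorem lt_right (h : MarkovFan a x b y c m) : m < 3 * y * m - x := h.mirror.lt_left

theorem left (h : MarkovFan a x b y c m) :
    MarkovFan a x c m (3 * x * c - b) (3 * x * m - y) where
  pos₁ := h.pos₁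
  pos₂ := h.pos₃
  pos₃ := h.pos₃.trans h.lt_left
  coprime := h.rotate.rotate.coprime.symm
  eq := by linear_combination h.eq
  left_le := h.left_le.trans h.lt_left.le
  right_le := h.lt_left.le
  det_left := by linear_combination 3 * x * h.det_left - h.det_outer
  det_right := by linear_combination h.det_right

theorem right (h : MarkovFan a x b y c m) :
    MarkovFan c m b y (3 * y * c - a) (3 * y * m - x) := by
  have := h.mirror.left.mirror
  simpa only [neg_neg, mul_neg, neg_sub, sub_neg_eq_add, neg_add_eq_sub, neg_add_rev] using this

end MarkovFan

theorem eq_one_of_markov_eq {x y : ℤ} (hx : 0 < x) (hxy : x ≤ y)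
    (h : x ^ 2 + y ^ 2 + y ^ 2 = 3 * x * y * y) : x = 1 ∧ y = 1 := by
  obtain rfl : x = 1 := by
    by_contra hne
    have : 2 ≤ x := by omega
    nlinarith [mul_pos (hx.trans_le hxy) (hx.trans_le hxy)]
  exact ⟨rfl, by nlinarith⟩

theorem vieta_pos_and_le {x y m : ℤ} (hx : 0 < x) (hxy : x ≤ y) (hym : y < m)
    (h : x ^ 2 + y ^ 2 + m ^ 2 = 3 * x * y * m) : 0 < 3 * x * y - m ∧ 3 * x * y - m ≤ y := by
  have hy : 0 < y := hx.trans_le hxy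
  have hprod : m * (3 * x * y - m) = x ^ 2 + y ^ 2 := by linear_combination -h
  refine ⟨pos_of_mul_pos_right (hprod ▸ by positivity) (hy.trans hym).le, ?_⟩
  have hroots : (m - y) * (3 * x * y - m - y) ≤ 0 := by
    calc (m - y) * (3 * x * y - m - y) = x ^ 2 - y ^ 2 - 3 * y ^ 2 * (x - 1) := by
          linear_combination hprod
      _ ≤ 0 := by nlinarith [mul_nonneg (sq_nonneg y) (sub_nonneg.2 (Int.add_one_le_iff.2 hx))]
  linarith [nonpos_of_mul_nonpos_right hroots (sub_pos.2 hym)]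

theorem exists_markovFan_of_eq {x y m : ℤ} (hx : 0 < x) (hy : 0 < y) (hxm : x ≤ m) (hym : y ≤ m)
    (h : x ^ 2 + y ^ 2 + m ^ 2 = 3 * x * y * m) : ∃ a b c, MarkovFan a x b y c m := by
  induction hn : m.toNat using Nat.strong_induction_on generalizing x y m with
  | _ n ih =>
    wlog hxy : x ≤ y generalizing x y
    · obtain ⟨a, b, c, hf⟩ := this hy hx hym hxm (by linear_combination h) (by omega)
      exact ⟨_, _, _, hf.mirror⟩
    rcases hym.eq_or_lt with rfl | hlt
    · obtain ⟨rfl, rfl⟩ := eq_one_of_markov_eq hx hxy h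
      exact ⟨_, _, _, .root⟩
    · obtain ⟨hpos, hle⟩ := vieta_pos_and_le hx hxy hlt h
      obtain ⟨a, b, c, hf⟩ :=
        ih y.toNat (by omega) hx hpos hxy hle (by linear_combination h) rfl
      have := hf.left
      rw [sub_sub_cancel] at this
      exact ⟨_, _, _, this⟩

theorem IsMarkovNumber.exists_markovFan {n : ℕ} (hn : IsMarkovNumber n) :
    ∃ a x b y c, MarkovFan a x b y c n := by
  obtain ⟨x, y, ⟨hx, hy, -, h⟩, hxn, hyn⟩ := hn
  obtain ⟨a, b, c, hf⟩ := exists_markovFan_of_eq (m := n) (Nat.cast_pos.2 hx) (Nat.cast_pos.2 hy)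
    (Nat.cast_le.2 hxn) (Nat.cast_le.2 hyn) (by exact_mod_cast h)
  exact ⟨a, x, b, y, c, hf⟩

theorem MarkovFan.isMarkovNumber {a x b y c m : ℤ} (h : MarkovFan a x b y c m) :
    IsMarkovNumber m.toNat := by
  have hx := h.pos₁
  have hy := h.pos₂
  have hxm := h.left_le
  have hym := h.right_le
  refine ⟨x.toNat, y.toNat, ⟨by omega, by omega, by omega, ?_⟩, by omega, by omega⟩
  zify
  simpa only [Int.toNat_of_nonneg hx.le, Int.toNat_of_nonneg hy.le,
    Int.toNat_of_nonneg h.pos₃.le] using h.eq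

/-! ### The minimum of Markov's forms -/

/-- For `c ^ 2 + 1 = l * m` this is `m` times Markov's form
`m * p ^ 2 + (3 * m - 2 * c) * p * q + (l - 3 * c) * q ^ 2`, written in terms of `p * m - c * q`
and `q`, so that no division by `m` is needed. -/
def scaledMarkovForm (c m p q : ℤ) : ℤ :=
  (p * m - c * q) ^ 2 + 3 * m * (p * m - c * q) * q + q ^ 2

theorem scaledMarkovForm_neg_neg (c m p q : ℤ) :
    scaledMarkovForm c m (-p) (-q) = scaledMarkovForm c m p q := by
  unfold scaledMarkovForm; ring

theorem scaledMarkovForm_mirror (c m p q : ℤ) :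
    scaledMarkovForm (-c) m (-p - 3 * q) q = scaledMarkovForm c m p q := by
  unfold scaledMarkovForm; ring

namespace MarkovFan

variable {a x b y c m l p q : ℤ}

theorem sq_le_scaledMarkovForm (h : MarkovFan a x b y c m) (hv : p ≠ 0 ∨ q ≠ 0) (hq : 0 ≤ q)
    (hp : c * q ≤ p * m) : m ^ 2 ≤ scaledMarkovForm c m p q := by
  refine (h.sq_le_of_dvd (sub_nonneg.2 hp) hq ?_ ⟨b * q - y * p, ?_⟩).trans_eq ?_
  · by_contra! ⟨hE, hq0⟩
    rw [hq0, mul_zero, sub_zero, mul_eq_zero, or_iff_left h.pos₃.ne'] at hE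
    exact hv.elim (· hE) (· hq0)
  · linear_combination -q * h.det_right
  · unfold scaledMarkovForm; ring

theorem sq_le_neg_scaledMarkovForm (h : MarkovFan a x b y c m) (hv : p ≠ 0 ∨ q ≠ 0)
    (hS : (b - 3 * y) * q ≤ y * p) (hT : x * p ≤ a * q) :
    m ^ 2 ≤ -scaledMarkovForm c m p q := by
  have hm := h.pos₃.ne'
  obtain ⟨S, hSdef⟩ : ∃ S, S = y * p - (b - 3 * y) * q := ⟨_, rfl⟩
  obtain ⟨T, hTdef⟩ : ∃ T, T = a * q - x * p := ⟨_, rfl⟩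
  have hq : m * q = x * S + y * T := by
    rw [hSdef, hTdef]; linear_combination q * h.det_outer
  have hE : m * (p * m - c * q) = x * T - y * S - 3 * m * y * T := by
    apply mul_left_cancel₀ hm
    rw [hSdef, hTdef]
    linear_combination (m * p - c * q) * h.eq + (x - 3 * m * y) * q * h.det_left -
      y * q * h.det_right
  have hF : -scaledMarkovForm c m p q = S ^ 2 + T ^ 2 + 3 * m * S * T := by
    apply mul_left_cancel₀ (pow_ne_zero 2 hm)
    unfold scaledMarkovForm
    linear_combination -(m * (p * m - c * q) + x * T - y * S - 3 * m * y * T) * hE -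
      3 * m * (m * q) * hE - 3 * m * (x * T - y * S - 3 * m * y * T) * hq -
      (m * q + x * S + y * T) * hq + (-(S ^ 2) - T ^ 2 - 3 * m * S * T) * h.eq
  rw [hF]
  refine h.sq_le_of_dvd (hSdef ▸ sub_nonneg.2 hS) (hTdef ▸ sub_nonneg.2 hT) ?_
    ⟨p * m - c * q + 3 * y * T, by linear_combination -hE⟩
  by_contra! h0
  simp only [h0.1, h0.2, mul_zero, add_zero, sub_zero, mul_eq_zero, hm, false_or] at hq hE
  rw [hq, mul_zero, sub_zero, mul_eq_zero, or_iff_left hm] at hE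
  exact hv.elim (· hE) (· hq)

theorem left_dvd_sq_add_one (h : MarkovFan a x b y c m) : x ∣ a ^ 2 + 1 := by
  have hcop : IsCoprime x (m ^ 2) := h.rotate.rotate.coprime.symm.pow_right
  refine hcop.dvd_of_dvd_mul_left ⟨c ^ 2 * x - 2 * c * y + 3 * y * m - x, ?_⟩
  linear_combination h.eq - (a * m + c * x - y) * h.det_left

/-- The half-turn about the fixed point of `w ↦ (a * w - l) / (x * w - a)` interchanges the two
roots of the form, so it changes the sign of the form. -/
theorem scaledMarkovForm_halfTurn (h : MarkovFan a x b y c m) (hl : a ^ 2 + 1 = x * l) :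
    scaledMarkovForm c m (a * p - l * q) (x * p - a * q) = -scaledMarkovForm c m p q := by
  have key (p q : ℤ) : x ^ 2 * scaledMarkovForm c m p q =
      m ^ 2 * ((x * p - a * q) ^ 2 - q ^ 2) +
        (3 * m ^ 2 * x - 2 * m * y) * q * (x * p - a * q) := by
    have hE : x * (p * m - c * q) = m * (x * p - a * q) - y * q := by
      linear_combination -q * h.det_left
    unfold scaledMarkovForm
    linear_combination (x * (p * m - c * q) + m * (x * p - a * q) - y * q + 3 * m * x * q) * hE +
      q ^ 2 * h.eq
  apply mul_left_cancel₀ (pow_ne_zero 2 h.pos₁.ne')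
  have hq : x * (a * p - l * q) - a * (x * p - a * q) = -q := by linear_combination q * hl
  rw [key, hq, mul_neg (x ^ 2), key]
  ring

theorem exists_abs_scaledMarkovForm_eq (h : MarkovFan a x b y c m) (hq : 0 ≤ q)
    (hp : p * m < c * q) (hpos : a * q < x * p) :
    ∃ p' q', 0 < q' ∧ q' < q ∧ |scaledMarkovForm c m p' q'| = |scaledMarkovForm c m p q| := by
  obtain ⟨l, hl⟩ := h.left_dvd_sq_add_one
  refine ⟨a * p - l * q, x * p - a * q, sub_pos.2 hpos, ?_, by
    rw [h.scaledMarkovForm_halfTurn hl, abs_neg]⟩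
  refine lt_of_mul_lt_mul_left ?_ h.pos₃.le
  calc m * (x * p - a * q) = x * (p * m - c * q) + y * q := by
        linear_combination q * h.det_left
    _ < y * q := add_lt_of_neg_left _ (mul_neg_of_pos_of_neg h.pos₁ (sub_neg.2 hp))
    _ ≤ m * q := mul_le_mul_of_nonneg_right h.right_le hq

theorem sq_le_abs_scaledMarkovForm_of_nonneg (h : MarkovFan a x b y c m) (hv : p ≠ 0 ∨ q ≠ 0)
    (hq : 0 ≤ q) : m ^ 2 ≤ |scaledMarkovForm c m p q| := by
  induction hn : q.toNat using Nat.strong_induction_on generalizing a x b y c p q with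
  | _ n ih =>
    have hmv : -p - 3 * q ≠ 0 ∨ q ≠ 0 := by omega
    by_cases hright : c * q ≤ p * m
    · exact (h.sq_le_scaledMarkovForm hv hq hright).trans (le_abs_self _)
    by_cases hleft : -c * q ≤ (-p - 3 * q) * m
    · rw [← scaledMarkovForm_mirror]
      exact (h.mirror.sq_le_scaledMarkovForm hmv hq hleft).trans (le_abs_self _)
    by_cases hturn : a * q < x * p
    · obtain ⟨p', q', hpos, hlt, heq⟩ :=
        h.exists_abs_scaledMarkovForm_eq hq (not_le.1 hright) hturn
      rw [← heq]
      exact ih _ (by omega) h (Or.inr hpos.ne') hpos.le rfl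
    by_cases hturn' : -b * q < y * (-p - 3 * q)
    · obtain ⟨p', q', hpos, hlt, heq⟩ :=
        h.mirror.exists_abs_scaledMarkovForm_eq hq (not_le.1 hleft) hturn'
      rw [← scaledMarkovForm_mirror, ← heq]
      exact ih _ (by omega) h.mirror (Or.inr hpos.ne') hpos.le rfl
    exact (h.sq_le_neg_scaledMarkovForm hv (by linarith) (not_lt.1 hturn)).trans (neg_le_abs _)

theorem sq_le_abs_scaledMarkovForm (h : MarkovFan a x b y c m) (hv : p ≠ 0 ∨ q ≠ 0) :
    m ^ 2 ≤ |scaledMarkovForm c m p q| := by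
  rcases le_total 0 q with hq | hq
  · exact h.sq_le_abs_scaledMarkovForm_of_nonneg hv hq
  · rw [← scaledMarkovForm_neg_neg]
    exact h.sq_le_abs_scaledMarkovForm_of_nonneg (by simpa only [ne_eq, neg_eq_zero] using hv)
      (neg_nonneg.2 hq)

end MarkovFan

/-! ### Admissible forms with small gap -/

/-- The form `(p - θ * q) * (p - φ * q)`, of discriminant `(φ - θ) ^ 2`, has absolute value at least
`1` at all nonzero integer vectors. Both spectra are studied through the possible gaps `φ - θ`. -/
def IsAdmissible (θ φ : ℝ) : Prop :=
  ∀ p q : ℤ, (p ≠ 0 ∨ q ≠ 0) → 1 ≤ |((p : ℝ) - θ * q) * (p - φ * q)|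

namespace IsAdmissible

variable {θ φ : ℝ}

theorem add_int (h : IsAdmissible θ φ) (k : ℤ) : IsAdmissible (θ + k) (φ + k) := by
  intro p q hv
  have hv' : p - k * q ≠ 0 ∨ q ≠ 0 := by
    by_contra! ⟨hp, rfl⟩
    exact hv.elim (· (by simpa using hp)) (· rfl)
  convert h (p - k * q) q hv' using 2
  push_cast
  ring

theorem reflect (h : IsAdmissible θ φ) : IsAdmissible (-φ - 3) (-θ - 3) := by
  intro p q hv
  convert h (-p - 3 * q) q (by omega) using 2
  push_cast
  ring

theorem mul_ne (h : IsAdmissible θ φ) (p : ℤ) {q : ℤ} (hq : q ≠ 0) : φ * q ≠ p := by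
  intro he
  have := h p q (Or.inr hq)
  rw [he, sub_self, mul_zero, abs_zero] at this
  exact zero_lt_one.not_ge this

theorem irrational (h : IsAdmissible θ φ) : Irrational φ := by
  rintro ⟨r, rfl⟩
  exact h.mul_ne r.num (Int.natCast_ne_zero.2 r.den_nz) (by exact_mod_cast r.mul_den_eq_num)

theorem one_le_abs (h : IsAdmissible θ φ) {p q : ℤ} (hp : θ * q < p) :
    1 ≤ |((p : ℝ) - θ * q) * (p - φ * q)| := by
  refine h p q ?_
  by_contra! ⟨rfl, rfl⟩
  simp at hp

theorem one_le_of_lt (h : IsAdmissible θ φ) {p q : ℤ} (h₁ : θ * q < p) (h₂ : φ * q < p) :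
    1 ≤ ((p : ℝ) - θ * q) * (p - φ * q) :=
  (h.one_le_abs h₁).trans_eq (abs_of_pos (mul_pos (sub_pos.2 h₁) (sub_pos.2 h₂)))

theorem one_le_of_lt_of_lt (h : IsAdmissible θ φ) {p q : ℤ} (h₁ : θ * q < p) (h₂ : p < φ * q) :
    1 ≤ ((p : ℝ) - θ * q) * (φ * q - p) := by
  have := h.one_le_abs h₁
  rwa [abs_of_neg (mul_neg_of_pos_of_neg (sub_pos.2 h₁) (sub_neg.2 h₂)), ← mul_neg, neg_sub] at this

end IsAdmissible

/-- The left fraction `a/x` of a fan lies in `(θ, φ)` and the right fraction `b/y` in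
`(θ + 3, φ + 3)`: the walk through the tree of Markov triples keeps this property. -/
structure MarkovFan.Straddles (a x b y : ℤ) (θ φ : ℝ) : Prop where
  left_gt : θ * x < a
  left_lt : a < φ * x
  right_gt : (θ + 3) * y < b
  right_lt : b < (φ + 3) * y

theorem MarkovFan.three_mul_le {a x b y c m : ℤ} (h : MarkovFan a x b y c m) (hm : 1 < m) :
    3 * x * y ≤ 2 * m := by
  have hx := h.pos₁
  have hy := h.pos₂
  by_cases h11 : x = 1 ∧ y = 1
  · obtain ⟨rfl, rfl⟩ := h11
    omega
  have hle : 3 * x * y - m ≤ x + y := by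
    refine le_of_mul_le_mul_left ?_ h.pos₃
    calc m * (3 * x * y - m) = x * x + y * y := by linear_combination -h.eq
      _ ≤ m * x + m * y := by gcongr; exacts [h.left_le, h.right_le]
      _ = m * (x + y) := (mul_add ..).symm
  nlinarith [mul_nonneg (sub_nonneg.2 (Int.add_one_le_iff.2 hx))
    (sub_nonneg.2 (Int.add_one_le_iff.2 hy)), show 3 ≤ x + y by omega]

theorem eq_and_mul_eq_one_of_nonneg {x y k e₁ e₂ : ℝ} (hx : 0 < x) (hy : 0 < y)
    (h₁ : 1 ≤ (k - e₂) * e₁) (h₂ : 1 ≤ (k - e₁) * e₂)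
    (hl : 0 ≤ x * (1 - (k - e₂) * e₁) + y * (e₁ - e₂))
    (hr : 0 ≤ y * (1 - (k - e₁) * e₂) + x * (e₂ - e₁)) : e₁ = e₂ ∧ (k - e₂) * e₁ = 1 := by
  have hx₁ := mul_nonneg hx.le (sub_nonneg.2 h₁)
  have hy₂ := mul_nonneg hy.le (sub_nonneg.2 h₂)
  have hge : 0 ≤ e₁ - e₂ := (mul_nonneg_iff_of_pos_left hy).1 (by linarith)
  have hle : 0 ≤ e₂ - e₁ := (mul_nonneg_iff_of_pos_left hx).1 (by linarith)
  obtain rfl : e₁ = e₂ := by linarith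
  rw [sub_self, mul_zero, add_zero, mul_nonneg_iff_of_pos_left hx] at hl
  exact ⟨rfl, by linarith⟩

namespace MarkovFan.Straddles

variable {a x b y c m : ℤ} {θ φ : ℝ}

theorem mirror (hs : Straddles a x b y θ φ) : Straddles (-b) y (-a) x (-φ - 3) (-θ - 3) where
  left_gt := by push_cast; linarith [hs.right_lt]
  left_lt := by push_cast; linarith [hs.right_gt]
  right_gt := by push_cast; linarith [hs.left_lt]
  right_lt := by push_cast; linarith [hs.left_gt]

theorem right (hs : Straddles a x b y θ φ) (h : MarkovFan a x b y c m) (hlt : c < φ * m) :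
    Straddles c m b y θ φ where
  left_gt := by
    have hx : (0 : ℝ) < x := by exact_mod_cast h.pos₁
    have hy : (0 : ℝ) < y := by exact_mod_cast h.pos₂
    have hm : (0 : ℝ) < m := by exact_mod_cast h.pos₃
    have hdet : (c * x - a * m : ℝ) = y := by exact_mod_cast h.det_left
    refine lt_of_mul_lt_mul_right ?_ hx.le
    linarith [mul_lt_mul_of_pos_right hs.left_gt hm]
  left_lt := hlt
  right_gt := hs.right_gt
  right_lt := hs.right_lt

theorem left (hs : Straddles a x b y θ φ) (h : MarkovFan a x b y c m) (hlt : (θ + 3) * m < c) :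
    Straddles a x c m θ φ := by
  have := (hs.mirror.right h.mirror (by push_cast; linarith)).mirror
  simpa only [neg_neg, neg_sub, sub_neg_eq_add, add_sub_cancel_left] using this

theorem mul_le (hs : Straddles a x b y θ φ) (h : MarkovFan a x b y c m) (hadm : IsAdmissible θ φ)
    (hlt : φ - θ < 3) (hm : 1 < m) : (3 - (φ - θ)) * y * m ≤ x := by
  have hx : (0 : ℝ) < x := by exact_mod_cast h.pos₁
  have hy : (0 : ℝ) < y := by exact_mod_cast h.pos₂
  have hdet : (b * x - a * y : ℝ) = 3 * x * y - m := by exact_mod_cast h.det_outer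
  have heq : (x ^ 2 + y ^ 2 + m ^ 2 : ℝ) = 3 * x * y * m := by exact_mod_cast h.eq
  have h3 : (3 * x * y : ℝ) ≤ 2 * m := by exact_mod_cast h.three_mul_le hm
  obtain ⟨u, hu⟩ : ∃ u, u = φ * x - a := ⟨_, rfl⟩
  obtain ⟨δ, hδ⟩ : ∃ δ, δ = 3 - (φ - θ) := ⟨_, rfl⟩
  have hpos : 0 < 3 * x * y - m - δ * x * y - u * y := by
    calc 0 < b * x - (θ + 3) * y * x := sub_pos.2 (mul_lt_mul_of_pos_right hs.right_gt hx)
      _ = 3 * x * y - m - δ * x * y - u * y := by rw [hu, hδ]; linear_combination hdet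
  have hδpos : 0 < δ * x * y := by rw [hδ]; have := sub_pos.2 hlt; positivity
  have hone : 1 ≤ ((3 - δ) * x - u) * u := by
    calc 1 ≤ (a - θ * x) * (φ * x - a) := hadm.one_le_of_lt_of_lt hs.left_gt hs.left_lt
      _ = ((3 - δ) * x - u) * u := by rw [hu, hδ]; ring
  rw [← hδ]
  refine le_of_mul_le_mul_left ?_ hx
  refine sub_nonneg.1 ?_
  calc 0 ≤ (3 * x * y - m - δ * x * y - u * y) * (m - u * y) +
        y ^ 2 * (((3 - δ) * x - u) * u - 1) :=
        add_nonneg (mul_nonneg hpos.le (by linarith)) (mul_nonneg (sq_nonneg _) (sub_nonneg.2 hone))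
    _ = x * x - x * (δ * y * m) := by linear_combination -heq

theorem mul_le_one (hs : Straddles a x b y θ φ) (h : MarkovFan a x b y c m)
    (hadm : IsAdmissible θ φ) (hlt : φ - θ < 3) (hm : 1 < m) : (3 - (φ - θ)) * m ≤ 1 := by
  have hxy : (0 : ℝ) < x + y := by exact_mod_cast add_pos h.pos₁ h.pos₂
  have hl := hs.mul_le h hadm hlt hm
  have hr := hs.mirror.mul_le h.mirror hadm.reflect (by linarith) hm
  refine le_of_mul_le_mul_left ?_ hxy
  linarith

theorem nonneg_of_left (hs : Straddles a x b y θ φ) (h : MarkovFan a x b y c m)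
    (hadm : IsAdmissible θ φ) :
    0 ≤ x * (1 - (c - θ * m) * (c - φ * m)) + y * ((c - φ * m) - ((θ + 3) * m - c)) := by
  have hx : (0 : ℝ) < x := by exact_mod_cast h.pos₁
  have hdet : (c * x - a * m : ℝ) = y := by exact_mod_cast h.det_left
  have heq : (x ^ 2 + y ^ 2 + m ^ 2 : ℝ) = 3 * x * y * m := by exact_mod_cast h.eq
  have hone := hadm.one_le_of_lt_of_lt hs.left_gt hs.left_lt
  refine le_of_mul_le_mul_left ?_ hx
  rw [mul_zero]
  calc 0 ≤ m ^ 2 * ((a - θ * x) * (φ * x - a) - 1) :=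
        mul_nonneg (sq_nonneg _) (sub_nonneg.2 hone)
    _ = x * (x * (1 - (c - θ * m) * (c - φ * m)) +
          y * ((c - φ * m) - ((θ + 3) * m - c))) := by
      linear_combination -heq + (a * m + c * x - y - (θ + φ) * x * m) * hdet

theorem sq_sub_eq (hs : Straddles a x b y θ φ) (h : MarkovFan a x b y c m)
    (hadm : IsAdmissible θ φ) (hlt : θ < φ) (h₁ : φ * m < c) (h₂ : c < (θ + 3) * m) :
    (φ - θ) ^ 2 = 9 - 4 / (m : ℝ) ^ 2 := by
  have hx : (0 : ℝ) < x := by exact_mod_cast h.pos₁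
  have hy : (0 : ℝ) < y := by exact_mod_cast h.pos₂
  have hm : (0 : ℝ) < m := by exact_mod_cast h.pos₃
  have hθφ := mul_lt_mul_of_pos_right hlt hm
  have hone := hadm.one_le_of_lt (hθφ.trans h₁) h₁
  have hone' := hadm.reflect.one_le_of_lt (p := -c) (q := m) (by push_cast; linarith)
    (by push_cast; linarith)
  have hl := hs.nonneg_of_left h hadm
  have hr := hs.mirror.nonneg_of_left h.mirror hadm.reflect
  push_cast at hone' hr
  obtain ⟨heq, hmul⟩ := eq_and_mul_eq_one_of_nonneg (k := 3 * m) (e₁ := c - φ * m)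
    (e₂ := (θ + 3) * m - c) hx hy (by linarith) (by linarith) (by linarith) (by linarith)
  field_simp
  linear_combination (6 * m + ((c - φ * m) - ((θ + 3) * m - c))) * heq - 4 * hmul

end MarkovFan.Straddles

theorem IsAdmissible.exists_markovFan {θ φ : ℝ} (hadm : IsAdmissible θ φ) (h₂ : 2 ≤ φ - θ)
    (h₃ : φ - θ < 3) :
    ∃ a x b y c m, MarkovFan a x b y c m ∧ (φ - θ) ^ 2 = 9 - 4 / (m : ℝ) ^ 2 := by
  wlog hφ : -1 < φ ∧ φ < 0 generalizing θ φ
  · have hne : (⌊φ⌋ : ℝ) ≠ φ := by simpa using (hadm.mul_ne ⌊φ⌋ one_ne_zero).symm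
    have hlt := (Int.floor_le φ).lt_of_ne hne
    have hlt' := Int.lt_floor_add_one φ
    have := this (hadm.add_int (-⌊φ⌋ - 1)) (by linarith) (by linarith)
      (by push_cast; constructor <;> linarith)
    rwa [add_sub_add_right_eq_sub] at this
  obtain ⟨m, ⟨a, x, b, y, c, h, hs⟩, hmax⟩ := Int.exists_greatest_of_bdd
    (P := fun m => ∃ a x b y c, MarkovFan a x b y c m ∧ MarkovFan.Straddles a x b y θ φ)
    ⟨max 1 ⌊1 / (3 - (φ - θ))⌋, by
      rintro m ⟨a, x, b, y, c, h, hs⟩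
      rw [le_max_iff, or_iff_not_imp_left, not_le, Int.le_floor, le_div_iff₀' (sub_pos.2 h₃)]
      exact hs.mul_le_one h hadm h₃⟩
    ⟨1, -1, 1, 1, 1, 0, .root, by constructor <;> push_cast <;> linarith [hφ.1, hφ.2]⟩
  have hle : φ * m ≤ c := by
    by_contra! hlt
    exact h.lt_right.not_ge (hmax _ ⟨_, _, _, _, _, h.right, hs.right h hlt⟩)
  have hle' : c ≤ (θ + 3) * m := by
    by_contra! hlt
    exact h.lt_left.not_ge (hmax _ ⟨_, _, _, _, _, h.left, hs.left h hlt⟩)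
  have hne := hadm.mul_ne c h.pos₃.ne'
  have hne' := hadm.reflect.mul_ne (-c) h.pos₃.ne'
  push_cast at hne'
  exact ⟨a, x, b, y, c, m, h, hs.sq_sub_eq h hadm (by linarith) (hle.lt_of_ne hne)
    (hle'.lt_of_ne fun he => hne' (by linarith))⟩

/-! ### Limits of forms -/

/-- The value at `(x, y)` of the binary quadratic form with coefficients `a`, `b`, `c`, whose
discriminant is Mathlib's `discrim a b c`. -/
def binaryForm {R : Type*} [CommRing R] (a b c x y : R) : R :=
  a * x ^ 2 + b * x * y + c * y ^ 2

section BinaryForm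

theorem binaryForm_mul_mul {R : Type*} [CommRing R] (a b c d x y : R) :
    binaryForm a b c (d * x) (d * y) = d ^ 2 * binaryForm a b c x y := by
  unfold binaryForm; ring

theorem exists_binaryForm_comp {R : Type*} [CommRing R] (a b c : R) {p q r s : R}
    (hdet : p * s - q * r = 1) :
    ∃ b' c', discrim (binaryForm a b c p q) b' c' = discrim a b c ∧ ∀ x y,
      binaryForm a b c (p * x + r * y) (q * x + s * y) =
        binaryForm (binaryForm a b c p q) b' c' x y := by
  refine ⟨2 * a * p * r + b * (p * s + q * r) + 2 * c * q * s, binaryForm a b c r s, ?_,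
    fun x y => by unfold binaryForm; ring⟩
  unfold discrim binaryForm
  linear_combination (b ^ 2 - 4 * a * c) * (p * s - q * r + 1) * hdet

theorem exists_abs_binaryForm_eq {a b c : ℝ} (ha : a ≠ 0) (hD : 0 ≤ discrim a b c) :
    ∃ θ, ∀ x y, |binaryForm a b c x y| =
      |a| * |(x - θ * y) * (x - (θ + √(discrim a b c) / |a|) * y)| := by
  obtain ⟨T, hT⟩ : ∃ T, T = √(discrim a b c) / |a| := ⟨_, rfl⟩
  have hT2 : T ^ 2 * a ^ 2 = discrim a b c := by
    rw [hT, div_pow, sq_abs, Real.sq_sqrt hD]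
    field_simp
  refine ⟨(-b / a - T) / 2, fun x y => ?_⟩
  rw [← hT, ← abs_mul]
  congr 1
  apply mul_left_cancel₀ ha
  unfold discrim at hT2
  unfold binaryForm
  field_simp
  linear_combination y ^ 2 * hT2

/-- A form representing `k` primitively is equivalent to a form with leading coefficient `k`, and
a translation moves its smaller root to the unit interval. -/
theorem exists_reduced_form {a b c : ℝ} {p q : ℤ} (hpq : IsCoprime p q)
    (hk : binaryForm a b c p q ≠ 0) (hD : 0 ≤ discrim a b c) :
    ∃ θ ∈ Set.Icc (0 : ℝ) 1, ∃ r s : ℤ, p * s - q * r = 1 ∧ ∀ X Y : ℤ,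
      |binaryForm a b c ((p * X + r * Y : ℤ) : ℝ) ((q * X + s * Y : ℤ) : ℝ)| =
        |binaryForm a b c p q| *
          |(X - θ * Y) * (X - (θ + √(discrim a b c) / |binaryForm a b c p q|) * Y)| := by
  obtain ⟨u, v, huv⟩ := hpq
  have hdet : (p * u - q * -v : ℝ) = 1 := by exact_mod_cast by linear_combination huv
  obtain ⟨b', c', hdisc, hcomp⟩ := exists_binaryForm_comp a b c hdet
  obtain ⟨θ, hθ⟩ := exists_abs_binaryForm_eq hk (hdisc ▸ hD)
  refine ⟨Int.fract θ, ⟨Int.fract_nonneg _, (Int.fract_lt_one _).le⟩, -v + ⌊θ⌋ * p, u + ⌊θ⌋ * q,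
    by linear_combination huv, fun X Y => ?_⟩
  have := hθ (X + ⌊θ⌋ * Y) Y
  rw [← hcomp, hdisc] at this
  unfold Int.fract
  push_cast
  convert this using 3 <;> ring

theorem ne_zero_or_of_det_eq_one {p q r s X Y : ℤ} (hdet : p * s - q * r = 1)
    (hv : X ≠ 0 ∨ Y ≠ 0) : p * X + r * Y ≠ 0 ∨ q * X + s * Y ≠ 0 := by
  by_contra! ⟨hP, hQ⟩
  have hX : X = 0 := by linear_combination s * hP - r * hQ - X * hdet
  have hY : Y = 0 := by linear_combination p * hQ - q * hP - Y * hdet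
  exact hv.elim (· hX) (· hY)

variable {a b c t ε : ℝ} {p q : ℤ}

theorem isCoprime_of_forall_le_binaryForm (ht : 0 < t) (hε : ε ≤ t / 2) (hv : p ≠ 0 ∨ q ≠ 0)
    (hlt : (t - ε) * |binaryForm a b c p q| < √(discrim a b c))
    (H : ∀ P Q : ℤ, (P ≠ 0 ∨ Q ≠ 0) → p * Q = q * P →
      √(discrim a b c) ≤ (t + ε) * |binaryForm a b c P Q|) : IsCoprime p q := by
  obtain ⟨p', q', hcop, hp, hq⟩ := Int.exists_gcd_one (Int.gcd_pos_iff.2 hv)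
  obtain ⟨d, hd⟩ : ∃ d : ℕ, d = Int.gcd p q := ⟨_, rfl⟩
  rw [← hd, mul_comm] at hp hq
  have hd0 : d ≠ 0 := hd ▸ (Int.gcd_pos_iff.2 hv).ne'
  have hv' : p' ≠ 0 ∨ q' ≠ 0 := by
    by_contra! ⟨hp', hq'⟩
    simp [hp', hq'] at hcop
  have hlow := H p' q' hv' (by rw [hp, hq]; ring)
  rw [Int.isCoprime_iff_gcd_eq_one, ← hd]
  by_contra hd1
  have hd2 : (2 : ℝ) ≤ d := by exact_mod_cast show 2 ≤ d by omega
  rw [hp, hq] at hlt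
  push_cast at hlt
  rw [binaryForm_mul_mul, abs_mul, abs_of_nonneg (sq_nonneg (d : ℝ))] at hlt
  have hd4 : (2 : ℝ) ^ 2 ≤ d ^ 2 := by gcongr
  have hk := abs_nonneg (binaryForm a b c p' q')
  have hgap : (t - ε) * (2 ^ 2 * |binaryForm a b c p' q'|) ≤
      (t - ε) * (d ^ 2 * |binaryForm a b c p' q'|) := by
    have : 0 ≤ t - ε := by linarith
    gcongr
  have hcoef : (t + ε) * |binaryForm a b c p' q'| ≤ (t - ε) * 2 ^ 2 * |binaryForm a b c p' q'| :=
    mul_le_mul_of_nonneg_right (by linarith) hk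
  linarith

theorem exists_box_bound {N : ℕ} (ht : 0 < t) (hε : ε ≤ t / 2) (hD : 0 < discrim a b c)
    (hv : p ≠ 0 ∨ q ≠ 0) (hlt : (t - ε) * |binaryForm a b c p q| < √(discrim a b c))
    (H : ∀ P Q : ℤ, (P ≠ 0 ∨ Q ≠ 0) → |p * Q - q * P| ≤ N →
      √(discrim a b c) ≤ (t + ε) * |binaryForm a b c P Q|) :
    ∃ θ ∈ Set.Icc (0 : ℝ) 1, ∃ T, |T - t| ≤ ε ∧ ∀ X Y : ℤ, (X ≠ 0 ∨ Y ≠ 0) → |Y| ≤ N →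
      T ≤ (t + ε) * |(X - θ * Y) * (X - (θ + T) * Y)| := by
  have hcop : IsCoprime p q := isCoprime_of_forall_le_binaryForm ht hε hv hlt fun P Q hPQ heq =>
    H P Q hPQ (by rw [heq, sub_self, abs_zero]; exact Nat.cast_nonneg N)
  have hup := H p q hv (by rw [mul_comm, sub_self, abs_zero]; exact Nat.cast_nonneg N)
  have hk : binaryForm a b c p q ≠ 0 := by
    intro h0
    rw [h0, abs_zero, mul_zero] at hup
    exact (Real.sqrt_pos.2 hD).not_ge hup
  have hkpos := abs_pos.2 hk
  obtain ⟨θ, hθ, r, s, hdet, hform⟩ := exists_reduced_form hcop hk hD.le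
  refine ⟨θ, hθ, √(discrim a b c) / |binaryForm a b c p q|, ?_, fun X Y hXY hY => ?_⟩
  · have hle := (div_le_iff₀ hkpos).2 hup
    have hge := (le_div_iff₀ hkpos).2 hlt.le
    rw [abs_sub_le_iff]
    constructor <;> linarith
  · have hPQ := H (p * X + r * Y) (q * X + s * Y) (ne_zero_or_of_det_eq_one hdet hXY)
      (by convert hY using 2; linear_combination Y * hdet)
    rw [div_le_iff₀ hkpos, mul_assoc, mul_comm |_ * _|, ← hform]
    exact hPQ

end BinaryForm

open Filter Topology in
theorem exists_isAdmissible_of_forall_box {t : ℝ} (ht : 0 < t) {ε : ℕ → ℝ}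
    (hε : Tendsto ε atTop (𝓝 0))
    (H : ∀ n : ℕ, ∃ θ ∈ Set.Icc (0 : ℝ) 1, ∃ T, |T - t| ≤ ε n ∧
      ∀ X Y : ℤ, (X ≠ 0 ∨ Y ≠ 0) → |Y| ≤ n →
        T ≤ (t + ε n) * |(X - θ * Y) * (X - (θ + T) * Y)|) :
    ∃ θ, IsAdmissible θ (θ + t) := by
  choose θ hθ T hT hF using H
  obtain ⟨θ', -, ψ, hψ, hθlim⟩ := isCompact_Icc.tendsto_subseq hθ
  have hTlim : Tendsto (T ∘ ψ) atTop (𝓝 t) :=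
    (tendsto_iff_norm_sub_tendsto_zero.2 (squeeze_zero (fun _ => norm_nonneg _) hT hε)).comp
      hψ.tendsto_atTop
  have hεlim : Tendsto (ε ∘ ψ) atTop (𝓝 0) := hε.comp hψ.tendsto_atTop
  refine ⟨θ', fun X Y hv => ?_⟩
  have hlim : Tendsto (fun n => (t + (ε ∘ ψ) n) *
      |(X - (θ ∘ ψ) n * Y) * (X - ((θ ∘ ψ) n + (T ∘ ψ) n) * Y)|) atTop
      (𝓝 ((t + 0) * |(X - θ' * Y) * (X - (θ' + t) * Y)|)) :=
    (hεlim.const_add t).mul (((hθlim.mul_const _).const_sub _).mul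
      (((hθlim.add hTlim).mul_const _).const_sub _)).abs
  have hle : t ≤ (t + 0) * |(X - θ' * Y) * (X - (θ' + t) * Y)| := by
    refine le_of_tendsto_of_tendsto hTlim hlim ?_
    filter_upwards [eventually_ge_atTop Y.natAbs] with n hn
    refine hF (ψ n) X Y hv ?_
    rw [Int.abs_eq_natAbs]
    exact_mod_cast hn.trans (hψ.id_le n)
  rwa [add_zero, le_mul_iff_one_le_right ht] at hle

/-- The strip `|p * Q - q * P| ≤ N` around the line through a nearly minimal vector `(p, q)` becomes
a box condition in coordinates where this vector is `(1, 0)`, and a limit of the forms in these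
coordinates exists by compactness. A bound on the whole plane would be too much to ask for the
Lagrange spectrum, which says nothing about vectors with small denominator. -/
theorem exists_isAdmissible_of_strips {t : ℝ} (ht : 0 < t)
    (H : ∀ ε, 0 < ε → ε < t → ∀ N : ℕ, ∃ (a b c : ℝ) (p q : ℤ), 0 < discrim a b c ∧
      (p ≠ 0 ∨ q ≠ 0) ∧ (t - ε) * |binaryForm a b c p q| < √(discrim a b c) ∧
      ∀ P Q : ℤ, (P ≠ 0 ∨ Q ≠ 0) → |p * Q - q * P| ≤ N →
        √(discrim a b c) ≤ (t + ε) * |binaryForm a b c P Q|) :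
    ∃ θ, IsAdmissible θ (θ + t) := by
  have hlim : Filter.Tendsto (fun n : ℕ => t / 2 * (1 / ((n : ℝ) + 1))) Filter.atTop (nhds 0) := by
    simpa only [mul_zero] using tendsto_one_div_add_atTop_nhds_zero_nat.const_mul (t / 2)
  refine exists_isAdmissible_of_forall_box ht hlim fun n => ?_
  have hle : t / 2 * (1 / ((n : ℝ) + 1)) ≤ t / 2 :=
    mul_le_of_le_one_right (half_pos ht).le
      ((div_le_one n.cast_add_one_pos).2 (le_add_of_nonneg_left n.cast_nonneg))
  obtain ⟨a, b, c, p, q, hD, hv, hlt, hstrip⟩ :=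
    H _ (by positivity) (hle.trans_lt (half_lt_self ht)) n
  exact exists_box_bound ht hle hD hv hlt hstrip

/-! ### From the spectra to admissible forms -/

theorem markovVal_le_ofReal_iff {a b c t : ℝ} (ht : 0 < t) :
    markovVal a b c ≤ ENNReal.ofReal t ↔ ∀ p q : ℤ, (p ≠ 0 ∨ q ≠ 0) →
      √(discrim a b c) ≤ t * |binaryForm a b c p q| := by
  have hdiv (p q : ℤ) : ENNReal.ofReal √(discrim a b c) / ENNReal.ofReal |binaryForm a b c p q| ≤
      ENNReal.ofReal t ↔ √(discrim a b c) ≤ t * |binaryForm a b c p q| := by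
    rw [ENNReal.div_le_iff_le_mul (Or.inr ENNReal.ofReal_ne_top) (Or.inl ENNReal.ofReal_ne_top),
      ← ENNReal.ofReal_mul ht.le, ENNReal.ofReal_le_ofReal_iff (by positivity)]
  simp only [← hdiv, markovVal, iSup_le_iff, Prod.forall, ne_eq, Prod.mk.injEq, not_and_or]
  rfl

theorem exists_isAdmissible_of_mem_markovSpectrum {t : ℝ} (ht : t ∈ MarkovSpectrum)
    (ht0 : 0 < t) : ∃ θ, IsAdmissible θ (θ + t) := by
  obtain ⟨a, b, c, hD, htop, hval⟩ := ht
  have hval' : markovVal a b c = ENNReal.ofReal t := by rw [← hval, ENNReal.ofReal_toReal htop]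
  refine exists_isAdmissible_of_strips ht0 fun ε hε hεt N => ?_
  have hlow : ¬ markovVal a b c ≤ ENNReal.ofReal (t - ε) := by
    rw [hval', not_le, ENNReal.ofReal_lt_ofReal_iff ht0]
    exact sub_lt_self t hε
  rw [markovVal_le_ofReal_iff (sub_pos.2 hεt)] at hlow
  push Not at hlow
  obtain ⟨p, q, hv, hlt⟩ := hlow
  have hup := (markovVal_le_ofReal_iff (add_pos ht0 hε)).1
    (hval'.trans_le (ENNReal.ofReal_le_ofReal (le_add_of_nonneg_right hε.le)))
  exact ⟨a, b, c, p, q, hD, hv, hlt, fun P Q hPQ _ => hup P Q hPQ⟩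

section Lagrange

variable {α s : ℝ}

theorem distNearestInt_natCast_mul_le (α : ℝ) (p : ℤ) (q : ℕ) :
    distNearestInt (q * α) ≤ |p - α * q| := by
  rw [abs_sub_comm, mul_comm α]
  exact round_le _ _

theorem distNearestInt_pos (hα : Irrational α) : 0 < distNearestInt α :=
  abs_pos.2 (sub_ne_zero.2 (hα.ne_int _))

theorem natCast_mul_distNearestInt_pos (hα : Irrational α) {q : ℕ} (hq : q ≠ 0) :
    0 < q * distNearestInt (q * α) :=
  mul_pos (Nat.cast_pos.2 hq.bot_lt) (distNearestInt_pos (hα.natCast_mul hq))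

theorem exists_forall_one_le_of_lagrangeVal_lt (hα : Irrational α)
    (h : lagrangeVal α < ENNReal.ofReal s) :
    ∃ Q₀ : ℕ, ∀ P Q : ℤ, Q₀ < |Q| → 1 ≤ s * |Q * (P - α * Q)| := by
  have hs : 0 < s := ENNReal.ofReal_pos.1 (bot_le.trans_lt h)
  obtain ⟨Q₀, hQ₀⟩ := Filter.eventually_atTop.1 (Filter.eventually_lt_of_limsup_lt h)
  have hpos (P : ℤ) (q : ℕ) (hq : Q₀ < q) : 1 ≤ s * (q * |P - α * q|) := by
    have hlt := hQ₀ q hq.le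
    rw [ENNReal.ofReal_lt_ofReal_iff hs,
      div_lt_iff₀ (natCast_mul_distNearestInt_pos hα (Nat.ne_zero_of_lt hq))] at hlt
    refine hlt.le.trans ?_
    gcongr
    exact distNearestInt_natCast_mul_le α P q
  refine ⟨Q₀, fun P Q hQ => ?_⟩
  obtain ⟨q, rfl | rfl⟩ := Q.eq_nat_or_neg
  · simpa [abs_mul] using hpos P q (by simpa using hQ)
  · have hneg := hpos (-P) q (by simpa using hQ)
    rw [← abs_neg (_ - _)] at hneg
    simpa [abs_mul, add_comm] using hneg

theorem exists_lt_one_of_lt_lagrangeVal (hα : Irrational α) (hs : 0 ≤ s)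
    (h : ENNReal.ofReal s < lagrangeVal α) (M : ℕ) :
    ∃ p q : ℤ, M < q ∧ s * |q * (p - α * q)| < 1 := by
  obtain ⟨q, hq, hM⟩ := ((Filter.frequently_lt_of_lt_limsup (by isBoundedDefault) h).and_eventually
    (Filter.eventually_gt_atTop M)).exists
  refine ⟨round (q * α), q, by exact_mod_cast hM, ?_⟩
  rw [ENNReal.ofReal_lt_ofReal_iff_of_nonneg hs,
    lt_div_iff₀ (natCast_mul_distNearestInt_pos hα (Nat.ne_zero_of_lt hM))] at hq
  rwa [Int.cast_natCast, abs_mul, Nat.abs_cast, abs_sub_comm, mul_comm α]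

open Filter Topology in
theorem exists_forall_le_abs_sub_mul (hα : Irrational α) (N : ℕ) :
    ∃ c > 0, ∀ P Q : ℤ, (P ≠ 0 ∨ Q ≠ 0) → |Q| ≤ N → c ≤ |P - α * Q| := by
  have hsmall (Q : ℤ) : ∀ᶠ c in 𝓝[>] (0 : ℝ), ∀ P : ℤ, (P ≠ 0 ∨ Q ≠ 0) → c ≤ |P - α * Q| := by
    rcases eq_or_ne Q 0 with rfl | hQ
    · filter_upwards [Ioc_mem_nhdsGT one_pos] with c hc P hP
      refine hc.2.trans ?_
      rw [Int.cast_zero, mul_zero, sub_zero]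
      exact_mod_cast Int.one_le_abs (hP.resolve_right (· rfl))
    · filter_upwards [Ioc_mem_nhdsGT (distNearestInt_pos (hα.mul_intCast hQ))] with c hc P _
      rw [abs_sub_comm]
      exact hc.2.trans (round_le _ P)
  obtain ⟨c, hc, hpos⟩ := (((eventually_all_finite (Set.finite_Icc (-(N : ℤ)) N)).2
    fun Q _ => hsmall Q).and self_mem_nhdsWithin).exists
  exact ⟨c, hpos, fun P Q hv hQ => hc Q (abs_le.1 hQ) P hv⟩

/-- If the strip around `(p, q)` contained a vector with a bounded denominator `Q`, then
`p * Q - q * P = Q * (p - α * q) - q * (P - α * Q)` would bound `q`. -/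
theorem exists_forall_lt_abs_of_strip (hα : Irrational α) (hs : 0 < s) (Q₀ N : ℕ) :
    ∃ M : ℕ, ∀ p q P Q : ℤ, M < q → s * |q * (p - α * q)| < 1 → (P ≠ 0 ∨ Q ≠ 0) →
      |p * Q - q * P| ≤ N → Q₀ < |Q| := by
  obtain ⟨c, hc, hcQ⟩ := exists_forall_le_abs_sub_mul hα Q₀
  obtain ⟨M, hM⟩ := exists_nat_gt ((Q₀ / s + N) / c)
  rw [div_lt_iff₀ hc] at hM
  refine ⟨M, fun p q P Q hMq hpq hv hN => ?_⟩
  by_contra! hQ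
  have hq : (1 : ℝ) ≤ q := by exact_mod_cast show 1 ≤ q by omega
  have hapx : |(p - α * q : ℝ)| ≤ 1 / s := by
    rw [le_div_iff₀' hs]
    rw [abs_mul, abs_of_pos (by linarith)] at hpq
    exact (mul_le_mul_of_nonneg_left (le_mul_of_one_le_left (abs_nonneg _) hq) hs.le).trans hpq.le
  have hlt : (Q₀ / s + N : ℝ) < q * |P - α * Q| := by
    have hMq' : (M : ℝ) ≤ q := by exact_mod_cast hMq.le
    have hcPQ := hcQ P Q hv hQ
    refine hM.trans_le ?_
    gcongr
  have hQ' : |(Q : ℝ)| ≤ Q₀ := by exact_mod_cast hQ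
  have hN' : |(p * Q - q * P : ℝ)| ≤ N := by exact_mod_cast hN
  refine hlt.not_ge ?_
  calc q * |P - α * Q| = |Q * (p - α * q) - (p * Q - q * P)| := by
        rw [← abs_of_pos (zero_lt_one.trans_le hq), ← abs_mul, abs_of_pos (zero_lt_one.trans_le hq)]
        congr 1; ring
    _ ≤ |(Q : ℝ)| * |p - α * q| + |(p * Q - q * P : ℝ)| := (abs_sub _ _).trans_eq (by rw [abs_mul])
    _ ≤ Q₀ * (1 / s) + N := by gcongr
    _ = Q₀ / s + N := by rw [mul_one_div]

theorem exists_isAdmissible_of_mem_lagrangeSpectrum {t : ℝ} (ht : t ∈ LagrangeSpectrum)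
    (ht0 : 0 < t) : ∃ θ, IsAdmissible θ (θ + t) := by
  obtain ⟨α, hα, htop, hval⟩ := ht
  have hval' : lagrangeVal α = ENNReal.ofReal t := by rw [← hval, ENNReal.ofReal_toReal htop]
  refine exists_isAdmissible_of_strips ht0 fun ε hε hεt N => ?_
  have hs : 0 < t - ε := sub_pos.2 hεt
  have hlow : ENNReal.ofReal (t - ε) < lagrangeVal α := by
    rw [hval', ENNReal.ofReal_lt_ofReal_iff ht0]
    exact sub_lt_self t hε
  have hup : lagrangeVal α < ENNReal.ofReal (t + ε) := by
    rw [hval', ENNReal.ofReal_lt_ofReal_iff (add_pos ht0 hε)]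
    exact lt_add_of_pos_right t hε
  obtain ⟨Q₀, hQ₀⟩ := exists_forall_one_le_of_lagrangeVal_lt hα hup
  obtain ⟨M, hM⟩ := exists_forall_lt_abs_of_strip hα hs Q₀ N
  obtain ⟨p, q, hMq, hpq⟩ := exists_lt_one_of_lt_lagrangeVal hα hs.le hlow M
  have hform (P Q : ℤ) : binaryForm 0 1 (-α) P Q = Q * (P - α * Q) := by
    unfold binaryForm; ring
  have hD : discrim 0 1 (-α) = 1 := by unfold discrim; ring
  refine ⟨0, 1, -α, p, q, by simp [hD], Or.inr (by omega), ?_, fun P Q hv hN => ?_⟩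
  · rwa [hform, hD, Real.sqrt_one]
  · rw [hform, hD, Real.sqrt_one]
    exact hQ₀ P Q (hM p q P Q hMq hpq hv hN)

end Lagrange

/-! ### From admissible forms to the spectra -/

namespace IsAdmissible

variable {θ t : ℝ}

theorem mem_markovSpectrum (h : IsAdmissible θ (θ + t)) (ht : 0 < t) : t ∈ MarkovSpectrum := by
  have hdisc : discrim 1 (-(2 * θ + t)) (θ * (θ + t)) = t ^ 2 := by unfold discrim; ring
  have hform (p q : ℝ) : binaryForm 1 (-(2 * θ + t)) (θ * (θ + t)) p q =
      (p - θ * q) * (p - (θ + t) * q) := by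
    unfold binaryForm; ring
  have hval : markovVal 1 (-(2 * θ + t)) (θ * (θ + t)) = ENNReal.ofReal t := by
    refine le_antisymm ((markovVal_le_ofReal_iff ht).2 fun p q hv => ?_) ?_
    · rw [hdisc, Real.sqrt_sq ht.le, hform]
      exact le_mul_of_one_le_right ht.le (h p q hv)
    · refine le_iSup₂_of_le (1, 0) (by simp) (le_of_eq ?_)
      rw [← discrim, hdisc, Real.sqrt_sq ht.le]
      simp
  refine ⟨1, -(2 * θ + t), θ * (θ + t), (pow_pos ht 2).trans_eq hdisc.symm, ?_, ?_⟩
  · rw [hval]; exact ENNReal.ofReal_ne_top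
  · rw [hval, ENNReal.toReal_ofReal ht.le]

theorem lagrangeVal_le (h : IsAdmissible θ (θ + t)) (ht : 0 < t) :
    lagrangeVal (θ + t) ≤ ENNReal.ofReal t := by
  by_contra! hlt
  obtain ⟨s, hs, hts, hlt⟩ := ENNReal.lt_iff_exists_real_btwn.1 hlt
  rw [ENNReal.ofReal_lt_ofReal_iff_of_nonneg ht.le] at hts
  have hpos : 0 < s * (s - t) := mul_pos (ht.trans hts) (sub_pos.2 hts)
  obtain ⟨M, hM⟩ := exists_nat_gt (1 / (s * (s - t)))
  obtain ⟨p, q, hMq, hpq⟩ := exists_lt_one_of_lt_lagrangeVal h.irrational hs hlt M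
  have hq : (1 : ℝ) ≤ q := by exact_mod_cast show 1 ≤ q by omega
  have hMq' : (M : ℝ) ≤ q := by exact_mod_cast hMq.le
  have hone := h p q (Or.inr (by omega))
  rw [abs_mul] at hone
  rw [abs_mul, abs_of_pos (by linarith)] at hpq
  obtain ⟨d, hd⟩ : ∃ d, d = |p - (θ + t) * q| := ⟨_, rfl⟩
  rw [← hd] at hone hpq
  have hother : |p - θ * q| ≤ d + t * q := by
    rw [hd, ← abs_of_pos (mul_pos ht (by linarith : (0 : ℝ) < q))]
    exact (abs_add_le _ _).trans_eq' (by congr 1; ring)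
  have hd0 : 0 < d := (hd ▸ abs_nonneg _).lt_of_ne (by rintro rfl; linarith)
  have hgap : (s - t) * q < d := by
    have := hone.trans (mul_le_mul_of_nonneg_right hother hd0.le)
    exact lt_of_mul_lt_mul_right (by linarith : (s - t) * q * d < d * d) hd0.le
  rw [div_lt_iff₀ hpos] at hM
  refine hpq.not_ge ?_
  calc 1 ≤ q * (s * (s - t)) := hM.le.trans (by gcongr)
    _ ≤ q * (s * (s - t)) * q := le_mul_of_one_le_right (by positivity) hq
    _ = s * (q * ((s - t) * q)) := by ring
    _ ≤ s * (q * d) := by gcongr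

end IsAdmissible

theorem le_lagrangeVal_of_forall_exists {θ t : ℝ} (hirr : Irrational (θ + t))
    (H : ∀ N : ℕ, ∃ p q : ℤ, N < q ∧ θ * q < p ∧ (p - θ * q) * (p - (θ + t) * q) = 1) :
    ENNReal.ofReal t ≤ lagrangeVal (θ + t) := by
  by_contra! hlt
  obtain ⟨Q₀, hQ₀⟩ := exists_forall_one_le_of_lagrangeVal_lt hirr hlt
  obtain ⟨p, q, hq, hp, hone⟩ := H Q₀
  have hq0 : (0 : ℝ) < q := by exact_mod_cast show 0 < q by omega
  have hd : 0 < p - (θ + t) * q := pos_of_mul_pos_right (hone ▸ one_pos) (sub_pos.2 hp).le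
  have hle := hQ₀ p q (by rwa [abs_of_pos (by omega)])
  rw [abs_of_pos (mul_pos hq0 hd)] at hle
  linarith [mul_pos hd hd]

theorem exists_markov_pell {m : ℤ} (hm : 0 < m) (n : ℕ) :
    ∃ a b : ℤ, 0 ≤ a ∧ a < b ∧ n < b ∧ a ^ 2 - 3 * m * a * b + b ^ 2 = 1 := by
  induction n with
  | zero => exact ⟨0, 1, by norm_num⟩
  | succ n ih =>
    obtain ⟨a, b, ha, hab, hn, h⟩ := ih
    have hgrow : 3 * b ≤ 3 * m * b := mul_le_mul_of_nonneg_right (by omega) (by omega)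
    refine ⟨b, 3 * m * b - a, by omega, by omega, by push_cast; omega, ?_⟩
    linear_combination h

theorem sub_mul_sub_eq_scaledMarkovForm_div {m : ℤ} {t : ℝ} (hm : 0 < m)
    (ht : t ^ 2 = 9 - 4 / (m : ℝ) ^ 2) (c p q : ℤ) :
    (p - (c / m - (3 + t) / 2) * q) * (p - (c / m - (3 + t) / 2 + t) * q) =
      (scaledMarkovForm c m p q : ℝ) / m ^ 2 := by
  have hm' : (m : ℝ) ≠ 0 := by exact_mod_cast hm.ne'
  have ht' : t ^ 2 * m ^ 2 = 9 * m ^ 2 - 4 := by rw [ht]; field_simp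
  rw [eq_div_iff (pow_ne_zero 2 hm'), scaledMarkovForm]
  push_cast
  field_simp
  linear_combination (-q ^ 2 : ℝ) * ht'

namespace MarkovFan

variable {a x b y c m : ℤ}

theorem exists_isAdmissible (h : MarkovFan a x b y c m) {t : ℝ} (ht0 : 0 < t)
    (ht : t ^ 2 = 9 - 4 / (m : ℝ) ^ 2) : ∃ θ : ℝ, IsAdmissible θ (θ + t) ∧
      ∀ N : ℕ, ∃ p q : ℤ, N < q ∧ θ * q < p ∧ (p - θ * q) * (p - (θ + t) * q) = 1 := by
  have hm : (1 : ℝ) ≤ m := by exact_mod_cast h.pos₃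
  have hm2 : (0 : ℝ) < m ^ 2 := by positivity
  refine ⟨c / m - (3 + t) / 2, fun p q hv => ?_, fun N => ?_⟩
  · rw [sub_mul_sub_eq_scaledMarkovForm_div h.pos₃ ht, abs_div, abs_of_pos hm2, one_le_div hm2]
    exact_mod_cast h.sq_le_abs_scaledMarkovForm hv
  obtain ⟨u, v, hu, huv, hN, hpell⟩ := exists_markov_pell h.pos₃ N
  refine ⟨-u + c * v, m * v, ?_, ?_, ?_⟩
  · exact hN.trans_le (le_mul_of_one_le_left (by omega) h.pos₃)
  · have huv' : (u : ℝ) < v := by exact_mod_cast huv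
    have hu' : (0 : ℝ) ≤ u := by exact_mod_cast hu
    have hmv : (v : ℝ) ≤ m * v := le_mul_of_one_le_left (by linarith) hm
    have htmv : 0 < t * (m * v) := mul_pos ht0 (by linarith)
    push_cast
    rw [sub_mul, ← mul_assoc (c / m : ℝ), div_mul_cancel₀ _ (by linarith)]
    linarith
  · have hpell' : (u ^ 2 - 3 * m * u * v + v ^ 2 : ℝ) = 1 := by exact_mod_cast hpell
    rw [sub_mul_sub_eq_scaledMarkovForm_div h.pos₃ ht, div_eq_one_iff_eq hm2.ne', scaledMarkovForm]
    push_cast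
    linear_combination (m : ℝ) ^ 2 * hpell'

end MarkovFan

theorem IsAdmissible.exists_isMarkovNumber {θ t : ℝ} (h : IsAdmissible θ (θ + t)) (h₂ : 2 ≤ t)
    (h₃ : t < 3) : ∃ z : ℕ, IsMarkovNumber z ∧ t = √(9 - 4 / (z : ℝ) ^ 2) := by
  obtain ⟨_, _, _, _, _, m, hf, hsq⟩ := h.exists_markovFan (by linarith) (by linarith)
  have hm : (m.toNat : ℝ) = m := by exact_mod_cast Int.toNat_of_nonneg hf.pos₃.le
  refine ⟨m.toNat, hf.isMarkovNumber, ?_⟩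
  rw [hm, ← hsq, add_sub_cancel_left, Real.sqrt_sq (by linarith)]

theorem IsMarkovNumber.sqrt_mem_Ico {n : ℕ} (hn : IsMarkovNumber n) :
    √(9 - 4 / (n : ℝ) ^ 2) ∈ Set.Ico √5 3 := by
  obtain ⟨-, -, ⟨-, -, hpos, -⟩, -, -⟩ := hn
  have hn1 : (1 : ℝ) ≤ n := Nat.one_le_cast.2 hpos
  have hle : 4 / (n : ℝ) ^ 2 ≤ 4 := div_le_self (by norm_num) (one_le_pow₀ hn1)
  refine ⟨Real.sqrt_le_sqrt (by linarith), (Real.sqrt_lt' (by norm_num)).2 ?_⟩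
  have : 0 < 4 / (n : ℝ) ^ 2 := by positivity
  linarith

theorem IsMarkovNumber.sqrt_mem_inter_spectra {n : ℕ} (hn : IsMarkovNumber n) :
    √(9 - 4 / (n : ℝ) ^ 2) ∈ LagrangeSpectrum ∩ MarkovSpectrum := by
  obtain ⟨a, x, b, y, c, h⟩ := hn.exists_markovFan
  have hpos : 0 < √(9 - 4 / (n : ℝ) ^ 2) :=
    (Real.sqrt_pos.2 (by norm_num)).trans_le hn.sqrt_mem_Ico.1
  obtain ⟨θ, hadm, hone⟩ := h.exists_isAdmissible hpos
    (by rw [Real.sq_sqrt (Real.sqrt_pos.1 hpos).le, Int.cast_natCast])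
  have hval := le_antisymm (hadm.lagrangeVal_le hpos)
    (le_lagrangeVal_of_forall_exists hadm.irrational hone)
  refine ⟨⟨_, hadm.irrational, ?_, ?_⟩, hadm.mem_markovSpectrum hpos⟩
  · rw [hval]; exact ENNReal.ofReal_ne_top
  · rw [hval, ENNReal.toReal_ofReal hpos.le]

theorem inter_Ico_eq_setOf_isMarkovNumber {S : Set ℝ}
    (hadm : ∀ t ∈ S, 0 < t → ∃ θ, IsAdmissible θ (θ + t))
    (hS : ∀ z : ℕ, IsMarkovNumber z → √(9 - 4 / (z : ℝ) ^ 2) ∈ S) :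
    S ∩ Set.Ico √5 3 = {t : ℝ | ∃ z : ℕ, IsMarkovNumber z ∧ t = √(9 - 4 / (z : ℝ) ^ 2)} := by
  refine Set.Subset.antisymm (fun t ⟨ht, hI⟩ => ?_) ?_
  · have h₂ : 2 ≤ t := (Real.le_sqrt_of_sq_le (by norm_num)).trans hI.1
    obtain ⟨θ, h⟩ := hadm t ht (by linarith)
    exact h.exists_isMarkovNumber h₂ hI.2
  · rintro _ ⟨z, hz, rfl⟩
    exact ⟨hS z hz, hz.sqrt_mem_Ico⟩

/-- **Markov's theorem**: `L ∩ [√5, 3) = M ∩ [√5, 3) = {√(9 - 4/z²) : z a Markov number}`. -/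
theorem markov_theorem :
    LagrangeSpectrum ∩ Set.Ico (Real.sqrt 5) 3 = MarkovSpectrum ∩ Set.Ico (Real.sqrt 5) 3 ∧
    MarkovSpectrum ∩ Set.Ico (Real.sqrt 5) 3 =
      {t : ℝ | ∃ z : ℕ, IsMarkovNumber z ∧ t = Real.sqrt (9 - 4 / (z : ℝ) ^ 2)} := by
  have hL := inter_Ico_eq_setOf_isMarkovNumber
    (fun _ => exists_isAdmissible_of_mem_lagrangeSpectrum)
    fun _ hz => hz.sqrt_mem_inter_spectra.1
  have hM := inter_Ico_eq_setOf_isMarkovNumber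
    (fun _ => exists_isAdmissible_of_mem_markovSpectrum)
    fun _ hz => hz.sqrt_mem_inter_spectra.2
  exact ⟨hL.trans hM.symm, hM⟩
end

section
/- (Hall's ray) Every real number t ≥ 6 belongs to the Lagrange spectrum L; that is, for every t ≥ 6 there exists an irrational α with ℓ(α) = t, so [6, ∞) ⊆ L. -/
open scoped ENNReal

/-!
By Perron's formula, `ℓ([0; a₀, a₁, …])` is the limit superior of
`[aₙ; aₙ₊₁, …] + [0; aₙ₋₁, …, a₀]`. Let `x = [0; b₀, b₁, …]` and `y = [0; c₀, c₁, …]` have digits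
at most `m`, and let `N + x + y ≥ m + 2`. If `a` is the concatenation of longer and longer blocks
`cₖ₋₁ … c₀ N b₀ … bₖ₋₁`, then the centres of the blocks contribute `N + x + y` in the limit, and
all other positions contribute at most `m + 2`, so `ℓ = N + x + y`.

It remains to write `t ≥ 6` as `N + x + y` with digits at most `4`, and this is possible because
the sums `x + y` fill an interval of length greater than `1` (Hall). Indeed, the Cantor set `F(4)`
of such numbers is obtained from an interval by successively removing gaps that are no longer than
either of the two intervals they leave behind. Suppose that `s` lies in the sum of two such
intervals, neither shorter than the gap of the other. Removing the longer of the two gaps keeps `s`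
in the sum of the remaining intervals for a suitable choice of side, and in the limit `s` is a sum
of two points of `F(4)`.
-/

section ContinuedFractions

open Filter Topology Set

/-- The finite continued fraction `[0; w₁, …, wₙ₋₁, wₙ + x]`, as a function of `x`. -/
noncomputable def cfBranch (w : List ℕ+) (x : ℝ) : ℝ :=
  w.foldr (fun (d : ℕ+) y ↦ ((d : ℝ) + y)⁻¹) x

theorem cfBranch_cons (d : ℕ+) (w : List ℕ+) (x : ℝ) :
    cfBranch (d :: w) x = ((d : ℝ) + cfBranch w x)⁻¹ := rfl

theorem cfBranch_append (v w : List ℕ+) (x : ℝ) :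
    cfBranch (v ++ w) x = cfBranch v (cfBranch w x) := List.foldr_append

theorem one_le_cast_pnat (d : ℕ+) : (1 : ℝ) ≤ d := Nat.one_le_cast.2 d.pos

theorem inv_pnat_add_mem_Icc (d : ℕ+) {x : ℝ} (hx : 0 ≤ x) :
    ((d : ℝ) + x)⁻¹ ∈ Icc (0 : ℝ) 1 := by
  have := one_le_cast_pnat d
  exact ⟨by positivity, inv_le_one_of_one_le₀ (by linarith)⟩

theorem cfBranch_mem_Icc (w : List ℕ+) {x : ℝ} (hx : x ∈ Icc (0 : ℝ) 1) :
    cfBranch w x ∈ Icc (0 : ℝ) 1 := by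
  induction w with
  | nil => exact hx
  | cons d w ih => exact inv_pnat_add_mem_Icc d ih.1

theorem abs_inv_add_inv_add_sub_le {d e x y : ℝ} (hd : 1 ≤ d) (he : 1 ≤ e) (hx : 0 ≤ x)
    (hy : 0 ≤ y) :
    |(d + (e + x)⁻¹)⁻¹ - (d + (e + y)⁻¹)⁻¹| ≤ 1 / 4 * |x - y| := by
  have key : (d + (e + x)⁻¹)⁻¹ - (d + (e + y)⁻¹)⁻¹ =
      (x - y) / ((d * (e + x) + 1) * (d * (e + y) + 1)) := by
    field_simp
    ring
  have two_le {z : ℝ} (hz : 0 ≤ z) : 2 ≤ d * (e + z) + 1 := by nlinarith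
  have : 4 ≤ (d * (e + x) + 1) * (d * (e + y) + 1) := by nlinarith [two_le hx, two_le hy]
  rw [key, abs_div, abs_of_pos (by linarith : 0 < (d * (e + x) + 1) * (d * (e + y) + 1)),
    div_eq_inv_mul, one_div]
  gcongr

theorem abs_cfBranch_sub_le : ∀ (w : List ℕ+) {x y : ℝ}, x ∈ Icc (0 : ℝ) 1 → y ∈ Icc (0 : ℝ) 1 →
    |cfBranch w x - cfBranch w y| ≤ 2 * (1 / 2) ^ w.length
  | [], x, y, hx, hy => by
    simpa [cfBranch] using (abs_sub_le_of_le_of_le hx.1 hx.2 hy.1 hy.2).trans (by norm_num)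
  | [d], x, y, hx, hy => by
    have hx' := inv_pnat_add_mem_Icc d hx.1
    have hy' := inv_pnat_add_mem_Icc d hy.1
    simpa [cfBranch] using abs_sub_le_of_le_of_le hx'.1 hx'.2 hy'.1 hy'.2
  | d :: e :: w, x, y, hx, hy => by
    calc |cfBranch (d :: e :: w) x - cfBranch (d :: e :: w) y|
        ≤ 1 / 4 * |cfBranch w x - cfBranch w y| :=
          abs_inv_add_inv_add_sub_le (one_le_cast_pnat d) (one_le_cast_pnat e)
            (cfBranch_mem_Icc w hx).1 (cfBranch_mem_Icc w hy).1
      _ ≤ 1 / 4 * (2 * (1 / 2) ^ w.length) := by gcongr; exact abs_cfBranch_sub_le w hx hy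
      _ = 2 * (1 / 2) ^ (d :: e :: w).length := by simp only [List.length_cons]; ring

/-- The value `[0; a₀, a₁, a₂, …]` of an infinite continued fraction. -/
noncomputable def cfVal (a : ℕ → ℕ+) : ℝ :=
  limUnder atTop fun n ↦ cfBranch ((List.range n).map a) 0

theorem tendsto_cfVal (a : ℕ → ℕ+) :
    Tendsto (fun n ↦ cfBranch ((List.range n).map a) 0) atTop (𝓝 (cfVal a)) := by
  refine (cauchySeq_of_le_geometric (1 / 2) 2 (by norm_num) fun n ↦ ?_).tendsto_limUnder
  have h0 : (0 : ℝ) ∈ Icc (0 : ℝ) 1 := by simp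
  rw [List.range_succ, List.map_append, cfBranch_append, Real.dist_eq]
  simpa using abs_cfBranch_sub_le ((List.range n).map a) h0 (cfBranch_mem_Icc ([n].map a) h0)

theorem cfVal_mem_Icc (a : ℕ → ℕ+) : cfVal a ∈ Icc (0 : ℝ) 1 :=
  isClosed_Icc.mem_of_tendsto (tendsto_cfVal a) <|
    .of_forall fun _ ↦ cfBranch_mem_Icc _ (by simp)

theorem cfVal_eq_inv (a : ℕ → ℕ+) : cfVal a = ((a 0 : ℝ) + cfVal fun n ↦ a (n + 1))⁻¹ := by
  have h0 := (cfVal_mem_Icc fun n ↦ a (n + 1)).1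
  have := one_le_cast_pnat (a 0)
  refine tendsto_nhds_unique ((tendsto_cfVal a).comp (tendsto_add_atTop_nat 1)) ?_
  have hshift := (tendsto_cfVal fun n ↦ a (n + 1)).const_add (a 0 : ℝ)
  refine (hshift.inv₀ (by positivity)).congr fun n ↦ ?_
  simp only [Function.comp_apply, List.range_succ_eq_map, List.map_cons, List.map_map,
    cfBranch_cons]
  rfl

/-- The complete tail `[0; aₙ, aₙ₊₁, …]` of the continued fraction with digits `a`. -/
noncomputable def cfTail (a : ℕ → ℕ+) (n : ℕ) : ℝ := cfVal fun j ↦ a (n + j)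

theorem cfTail_zero (a : ℕ → ℕ+) : cfTail a 0 = cfVal a := by simp [cfTail]

theorem cfTail_mem_Icc (a : ℕ → ℕ+) (n : ℕ) : cfTail a n ∈ Icc (0 : ℝ) 1 := cfVal_mem_Icc _

theorem cfTail_eq_inv (a : ℕ → ℕ+) (n : ℕ) : cfTail a n = ((a n : ℝ) + cfTail a (n + 1))⁻¹ := by
  simpa [cfTail, add_assoc, add_comm 1] using cfVal_eq_inv fun j ↦ a (n + j)

theorem eq_cfBranch_of_eq_inv {b : ℕ → ℕ+} {y : ℕ → ℝ} {k : ℕ}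
    (hy : ∀ j < k, y j = ((b j : ℝ) + y (j + 1))⁻¹) :
    y 0 = cfBranch ((List.range k).map b) (y k) := by
  induction k with
  | zero => rfl
  | succ k ih =>
    rw [List.range_succ, List.map_append, cfBranch_append, ih fun j hj ↦ hy j (by lia),
      hy k (by lia)]
    rfl

theorem abs_sub_cfVal_le {b : ℕ → ℕ+} {y : ℕ → ℝ} {k : ℕ}
    (hy : ∀ j < k, y j = ((b j : ℝ) + y (j + 1))⁻¹) (hk : y k ∈ Icc (0 : ℝ) 1) :
    |y 0 - cfVal b| ≤ 2 * (1 / 2) ^ k := by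
  rw [eq_cfBranch_of_eq_inv hy, ← cfTail_zero, eq_cfBranch_of_eq_inv fun j _ ↦ cfTail_eq_inv b j]
  simpa using abs_cfBranch_sub_le ((List.range k).map b) hk (cfTail_mem_Icc b k)

theorem tendsto_const_mul_half_pow (C : ℝ) :
    Tendsto (fun k : ℕ ↦ C * (1 / 2) ^ k) atTop (𝓝 0) := by
  simpa using (tendsto_pow_atTop_nhds_zero_of_lt_one (by norm_num : (0 : ℝ) ≤ 1 / 2)
    (by norm_num)).const_mul C

theorem continuous_cfVal : Continuous cfVal := by
  refine continuous_iff_continuousAt.2 fun b ↦ Metric.tendsto_nhds.2 fun ε hε ↦ ?_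
  obtain ⟨k, hk⟩ := ((tendsto_const_mul_half_pow 2).eventually_lt_const hε).exists
  have agree : ∀ᶠ a in 𝓝 b, ∀ j ∈ Finset.range k, a j = b j :=
    (Filter.eventually_all_finset _).2 fun j _ ↦
      (continuous_apply j).continuousAt.eventually_mem ((isOpen_discrete {b j}).mem_nhds rfl)
  filter_upwards [agree] with a ha
  rw [Real.dist_eq, ← cfTail_zero a]
  refine (abs_sub_cfVal_le (fun j hj ↦ ?_) (cfTail_mem_Icc a k)).trans_lt hk
  rw [← ha j (Finset.mem_range.2 hj), cfTail_eq_inv]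

/-- The set `F(m)` of numbers `[0; a₀, a₁, …]` all of whose digits are at most `m`. -/
def boundedCF (m : ℕ+) : Set ℝ := cfVal '' {a | ∀ n, a n ≤ m}

theorem isCompact_boundedCF (m : ℕ+) : IsCompact (boundedCF m) := by
  have : IsCompact (univ.pi fun _ : ℕ ↦ Iic m) :=
    isCompact_univ_pi fun _ ↦ (finite_Iic m).isCompact
  convert this.image continuous_cfVal
  ext a
  simp [boundedCF, Pi.le_def]

theorem inv_add_mem_boundedCF {m d : ℕ+} (hd : d ≤ m) {x : ℝ} (hx : x ∈ boundedCF m) :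
    ((d : ℝ) + x)⁻¹ ∈ boundedCF m := by
  obtain ⟨a, ha, rfl⟩ := hx
  exact ⟨fun n ↦ n.casesOn d a, fun n ↦ by cases n; exacts [hd, ha _], cfVal_eq_inv _⟩

theorem cfBranch_mem_boundedCF {m : ℕ+} {w : List ℕ+} (hw : ∀ d ∈ w, d ≤ m) {x : ℝ}
    (hx : x ∈ boundedCF m) : cfBranch w x ∈ boundedCF m := by
  induction w with
  | nil => exact hx
  | cons d w ih =>
    rw [List.forall_mem_cons] at hw
    exact inv_add_mem_boundedCF hw.1 (ih hw.2)

end ContinuedFractions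

section Dissection

open Set
open scoped Pointwise

/-- The hull of a piece of a Cantor set together with the open gap that is removed from it next.
Either orientation of the line is allowed, so that statements about the part to the right of the
gap follow from those about the part to the left. -/
structure GappedInterval where
  left : ℝ
  gapLeft : ℝ
  gapRight : ℝ
  right : ℝ

namespace GappedInterval

/-- The length of the removed gap. -/
def gap (c : GappedInterval) : ℝ := |c.gapRight - c.gapLeft|

/-- The length of the hull. -/
def length (c : GappedInterval) : ℝ := |c.right - c.left|

/-- The same gapped interval, traversed in the opposite direction. -/
def reverse (c : GappedInterval) : GappedInterval := ⟨c.right, c.gapRight, c.gapLeft, c.left⟩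

/-- The endpoints of the hull and of the gap occur from left to right on the line. -/
def IsOrdered (c : GappedInterval) : Prop :=
  c.left < c.gapLeft ∧ c.gapLeft < c.gapRight ∧ c.gapRight < c.right

theorem gap_reverse (c : GappedInterval) : c.reverse.gap = c.gap := abs_sub_comm _ _

theorem length_reverse (c : GappedInterval) : c.reverse.length = c.length := abs_sub_comm _ _

end GappedInterval

/-- A dissection of a Cantor set into gapped intervals `𝒞`, in the sense of Hall: each gap is
dominated by the intervals on its two sides, and each of these intervals is again gapped by a gap
that is no longer. The endpoints lie in `K`, and gaps have length comparable to their intervals. -/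
structure IsDissection (𝒞 : Set GappedInterval) (K : Set ℝ) (C : ℝ) : Prop where
  reverse_mem : ∀ c ∈ 𝒞, c.reverse ∈ 𝒞
  isOrdered : ∀ c ∈ 𝒞, c.IsOrdered ∨ c.reverse.IsOrdered
  gap_le_left : ∀ c ∈ 𝒞, c.gap ≤ |c.gapLeft - c.left|
  length_le : ∀ c ∈ 𝒞, c.length ≤ C * c.gap
  left_mem : ∀ c ∈ 𝒞, c.left ∈ K
  exists_left : ∀ c ∈ 𝒞, ∃ e ∈ 𝒞, e.left = c.left ∧ e.right = c.gapLeft ∧ e.gap ≤ c.gap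

namespace IsDissection

variable {𝒞 𝒞' : Set GappedInterval} {K K' : Set ℝ} {C C' : ℝ} {c c' : GappedInterval} {s : ℝ}

theorem isOrdered_of_left_le (h : IsDissection 𝒞 K C) (hc : c ∈ 𝒞) (hle : c.left ≤ c.right) :
    c.IsOrdered :=
  (h.isOrdered c hc).resolve_right fun ⟨h₁, h₂, h₃⟩ ↦
    hle.not_gt (h₁.trans (h₂.trans h₃))

theorem gap_le_right (h : IsDissection 𝒞 K C) (hc : c ∈ 𝒞) : c.gap ≤ |c.right - c.gapRight| := by
  rw [← c.gap_reverse, abs_sub_comm]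
  exact h.gap_le_left _ (h.reverse_mem c hc)

theorem exists_right (h : IsDissection 𝒞 K C) (hc : c ∈ 𝒞) :
    ∃ e ∈ 𝒞, e.left = c.gapRight ∧ e.right = c.right ∧ e.gap ≤ c.gap := by
  obtain ⟨e, he, hleft, hright, hgap⟩ := h.exists_left _ (h.reverse_mem c hc)
  exact ⟨e.reverse, h.reverse_mem e he, hright, hleft, by
    rwa [e.gap_reverse, ← c.gap_reverse]⟩

theorem gap_le_length (h : IsDissection 𝒞 K C) (hc : c ∈ 𝒞) (hle : c.left ≤ c.right) :
    c.gap ≤ c.length := by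
  obtain ⟨h₁, h₂, h₃⟩ := h.isOrdered_of_left_le hc hle
  rw [GappedInterval.gap, GappedInterval.length, abs_of_pos (sub_pos.2 h₂),
    abs_of_nonneg (sub_nonneg.2 hle)]
  linarith

end IsDissection

/-- Two gapped intervals, neither shorter than the gap of the other, whose sum contains `s`. -/
structure IsLinked (𝒞 𝒞' : Set GappedInterval) (s : ℝ) (c c' : GappedInterval) : Prop where
  mem : c ∈ 𝒞
  mem' : c' ∈ 𝒞'
  left_le : c.left ≤ c.right
  left_le' : c'.left ≤ c'.right
  gap_le : c.gap ≤ c'.length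
  gap_le' : c'.gap ≤ c.length
  mem_Icc : s ∈ Icc (c.left + c'.left) (c.right + c'.right)

namespace IsLinked

variable {𝒞 𝒞' : Set GappedInterval} {K K' : Set ℝ} {C C' ε s : ℝ} {c c' e : GappedInterval}

theorem symm (l : IsLinked 𝒞 𝒞' s c c') : IsLinked 𝒞' 𝒞 s c' c :=
  ⟨l.mem', l.mem, l.left_le', l.left_le, l.gap_le', l.gap_le, by
    simpa only [add_comm] using l.mem_Icc⟩

theorem replace_left (l : IsLinked 𝒞 𝒞' s c c') (hgap : c'.gap ≤ c.gap) (he : e ∈ 𝒞)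
    (hle : e.left ≤ e.right) (hegap : e.gap ≤ c.gap) (hlen : c.gap ≤ e.length)
    (hs : s ∈ Icc (e.left + c'.left) (e.right + c'.right)) : IsLinked 𝒞 𝒞' s e c' :=
  ⟨he, l.mem', hle, l.left_le', hegap.trans l.gap_le, hgap.trans hlen, hs⟩

/-- Removing a gap from one interval leaves two intervals. The other interval is at least as long
as the gap, so its sums with these two intervals overlap, and one of them contains `s`. -/
theorem exists_shorter (l : IsLinked 𝒞 𝒞' s c c') (h : IsDissection 𝒞 K C)
    (hgap : c'.gap ≤ c.gap) :
    ∃ e, IsLinked 𝒞 𝒞' s e c' ∧ e.length + c.gap ≤ c.length := by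
  obtain ⟨h₁, h₂, h₃⟩ := h.isOrdered_of_left_le l.mem l.left_le
  have hgap_eq : c.gap = c.gapRight - c.gapLeft := abs_of_pos (sub_pos.2 h₂)
  have hlen_eq : c.length = c.right - c.left := abs_of_nonneg (sub_nonneg.2 l.left_le)
  obtain hs | hs := le_total s (c.gapLeft + c'.right)
  · obtain ⟨e, he, hleft, hright, hegap⟩ := h.exists_left c l.mem
    have helen : e.length = |c.gapLeft - c.left| := by rw [GappedInterval.length, hleft, hright]
    refine ⟨e, l.replace_left hgap he (by rw [hleft, hright]; exact h₁.le) hegap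
      (helen ▸ h.gap_le_left c l.mem) (by rw [hleft, hright]; exact ⟨l.mem_Icc.1, hs⟩), ?_⟩
    rw [helen, abs_of_pos (sub_pos.2 h₁)]
    linarith
  · obtain ⟨e, he, hleft, hright, hegap⟩ := h.exists_right l.mem
    have helen : e.length = |c.right - c.gapRight| := by rw [GappedInterval.length, hleft, hright]
    have hlen' : c'.length = c'.right - c'.left := abs_of_nonneg (sub_nonneg.2 l.left_le')
    have overlap : c.gapRight + c'.left ≤ s := by linarith [l.gap_le]
    refine ⟨e, l.replace_left hgap he (by rw [hleft, hright]; exact h₃.le) hegap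
      (helen ▸ h.gap_le_right l.mem) (by rw [hleft, hright]; exact ⟨overlap, l.mem_Icc.2⟩), ?_⟩
    rw [helen, abs_of_pos (sub_pos.2 h₃)]
    linarith

theorem exists_gap_lt (hε : 0 < ε) (h : IsDissection 𝒞 K C) (h' : IsDissection 𝒞' K' C') (n : ℕ)
    (l : IsLinked 𝒞 𝒞' s c c') (hlen : c.length + c'.length ≤ n * ε) :
    ∃ e e', IsLinked 𝒞 𝒞' s e e' ∧ e.gap < ε ∧ e'.gap < ε := by
  induction n generalizing c c' with
  | zero =>
    have := l.gap_le
    have := l.gap_le'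
    have : 0 ≤ c.gap := abs_nonneg _
    have : 0 ≤ c'.gap := abs_nonneg _
    norm_num at hlen
    exact ⟨c, c', l, by linarith, by linarith⟩
  | succ n ih =>
    push_cast at hlen
    obtain hle | hle := le_total c'.gap c.gap
    · obtain hlt | hge := lt_or_ge c.gap ε
      · exact ⟨c, c', l, hlt, hle.trans_lt hlt⟩
      obtain ⟨e, le, helen⟩ := l.exists_shorter h hle
      exact ih le (by linarith)
    · obtain hlt | hge := lt_or_ge c'.gap ε
      · exact ⟨c, c', l, hle.trans_lt hlt, hlt⟩
      obtain ⟨e', le, helen⟩ := l.symm.exists_shorter h' hle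
      exact ih le.symm (by linarith)

theorem mem_add (l : IsLinked 𝒞 𝒞' s c c') (h : IsDissection 𝒞 K C) (h' : IsDissection 𝒞' K' C')
    (hK : IsCompact K) (hK' : IsClosed K') : s ∈ K + K' := by
  refine (hK'.add_left_of_isCompact hK).closure_subset (Metric.mem_closure_iff.2 fun ε hε ↦ ?_)
  have hδ : 0 < ε / (|C| + |C'| + 1) := by positivity
  obtain ⟨n, hn⟩ := exists_nat_ge ((c.length + c'.length) / (ε / (|C| + |C'| + 1)))
  obtain ⟨e, e', le, hgap, hgap'⟩ := l.exists_gap_lt hδ h h' n ((div_le_iff₀ hδ).1 hn)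
  refine ⟨e.left + e'.left, Set.add_mem_add (h.left_mem e le.mem) (h'.left_mem e' le.mem'), ?_⟩
  have hgap_nonneg : 0 ≤ e.gap := abs_nonneg _
  have hgap_nonneg' : 0 ≤ e'.gap := abs_nonneg _
  calc dist s (e.left + e'.left)
      = s - (e.left + e'.left) := abs_of_nonneg (sub_nonneg.2 le.mem_Icc.1)
    _ ≤ (e.right - e.left) + (e'.right - e'.left) := by linarith [le.mem_Icc.2]
    _ ≤ e.length + e'.length := add_le_add (le_abs_self _) (le_abs_self _)
    _ ≤ C * e.gap + C' * e'.gap :=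
      add_le_add (h.length_le e le.mem) (h'.length_le e' le.mem')
    _ ≤ |C| * (ε / (|C| + |C'| + 1)) + |C'| * (ε / (|C| + |C'| + 1)) := by
      gcongr <;> exact le_abs_self _
    _ < (|C| + |C'| + 1) * (ε / (|C| + |C'| + 1)) := by linarith
    _ = ε := by field_simp

end IsLinked

theorem IsDissection.Icc_subset_add {𝒞 : Set GappedInterval} {K : Set ℝ} {C : ℝ}
    {c : GappedInterval} (h : IsDissection 𝒞 K C) (hK : IsCompact K) (hc : c ∈ 𝒞)
    (hle : c.left ≤ c.right) : Icc (c.left + c.left) (c.right + c.right) ⊆ K + K :=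
  fun _ hs ↦
    have hgap := h.gap_le_length hc hle
    IsLinked.mem_add ⟨hc, hc, hle, hle, hgap, hgap, hs⟩ h h hK hK.isClosed

end Dissection

section CompleteQuotients

open Set

/-- The finite continued fraction `[0; w₁, …, wₙ, y]`, as a function of the complete quotient `y`.
In this coordinate the gaps of Hall's dissection all have the same length. -/
noncomputable def cfSnoc (w : List ℕ+) (y : ℝ) : ℝ := cfBranch w y⁻¹

theorem cfSnoc_append_singleton (w : List ℕ+) (d : ℕ+) (y : ℝ) :
    cfSnoc (w ++ [d]) y = cfSnoc w (d + y⁻¹) := by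
  rw [cfSnoc, cfBranch_append]
  rfl

theorem cfSnoc_strictMonoOn_or_strictAntiOn (w : List ℕ+) :
    StrictMonoOn (cfSnoc w) (Ioi 0) ∨ StrictAntiOn (cfSnoc w) (Ioi 0) := by
  have hinv : StrictAntiOn (fun y : ℝ ↦ y⁻¹) (Ioi 0) := fun x hx y _ hxy ↦ inv_strictAnti₀ hx hxy
  induction w using List.reverseRecOn with
  | nil => exact .inr hinv
  | append_singleton w d ih =>
    have hanti : StrictAntiOn (fun y : ℝ ↦ (d : ℝ) + y⁻¹) (Ioi 0) := fun x hx y hy hxy ↦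
      add_lt_add_right (hinv hx hy hxy) _
    have hmaps : MapsTo (fun y : ℝ ↦ (d : ℝ) + y⁻¹) (Ioi 0) (Ioi 0) := fun y (hy : 0 < y) ↦
      show 0 < (d : ℝ) + y⁻¹ by positivity
    have heq : cfSnoc (w ++ [d]) = cfSnoc w ∘ fun y ↦ (d : ℝ) + y⁻¹ :=
      funext (cfSnoc_append_singleton w d)
    rw [heq]
    exact ih.symm.imp (fun h ↦ h.comp hanti hmaps) fun h ↦ h.comp_strictAntiOn hanti hmaps

/-- The coefficients are `q = qₙ` and `q' = qₙ₋₁`, the denominators of the last two convergents of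
`[0; w₁, …, wₙ]`. -/
theorem exists_abs_cfSnoc_sub_eq (w : List ℕ+) :
    ∃ q q' : ℝ, 0 < q ∧ 0 ≤ q' ∧ ∀ y z, 0 < y → 0 < z →
      |cfSnoc w y - cfSnoc w z| = |y - z| / ((q * y + q') * (q * z + q')) := by
  induction w using List.reverseRecOn with
  | nil =>
    refine ⟨1, 0, one_pos, le_rfl, fun y z hy hz ↦ ?_⟩
    simp only [cfSnoc, cfBranch, List.foldr_nil]
    rw [inv_sub_inv hy.ne' hz.ne', abs_div, abs_sub_comm, abs_of_pos (mul_pos hy hz)]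
    simp
  | append_singleton w d ih =>
    obtain ⟨q, q', hq, hq', h⟩ := ih
    refine ⟨q * d + q', q, by positivity, hq.le, fun y z hy hz ↦ ?_⟩
    have hsub : (d : ℝ) + y⁻¹ - (d + z⁻¹) = (z - y) / (y * z) := by field_simp; ring
    rw [cfSnoc_append_singleton, cfSnoc_append_singleton, h _ _ (by positivity) (by positivity),
      hsub, abs_div, abs_sub_comm, abs_of_pos (mul_pos hy hz)]
    field_simp
    ring

theorem abs_cfSnoc_sub_le {C y z y' z' : ℝ} (w : List ℕ+) (hy : 0 < y) (hz : 0 < z)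
    (hy' : 0 < y') (hz' : 0 < z') (h : ∀ q q' : ℝ, 0 < q → 0 ≤ q' →
      |y - z| * ((q * y' + q') * (q * z' + q')) ≤
        C * |y' - z'| * ((q * y + q') * (q * z + q'))) :
    |cfSnoc w y - cfSnoc w z| ≤ C * |cfSnoc w y' - cfSnoc w z'| := by
  obtain ⟨q, q', hq, hq', hw⟩ := exists_abs_cfSnoc_sub_eq w
  rw [hw y z hy hz, hw y' z' hy' hz', ← mul_div_assoc,
    div_le_div_iff₀ (by positivity) (by positivity)]
  exact h q q' hq hq'

end CompleteQuotients

section HallDissection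

open Set
open scoped Pointwise

/-- The periodic digit sequence `d, e, d, e, …`. -/
def alternating (d e : ℕ+) (n : ℕ) : ℕ+ := if Even n then d else e

theorem alternating_succ (d e : ℕ+) : (fun n ↦ alternating d e (n + 1)) = alternating e d := by
  ext n
  by_cases hn : Even n <;> simp [alternating, Nat.even_add_one, hn]

theorem cfVal_alternating_mem_boundedCF {m d e : ℕ+} (hd : d ≤ m) (he : e ≤ m) :
    cfVal (alternating d e) ∈ boundedCF m :=
  mem_image_of_mem _ fun n ↦ by unfold alternating; split_ifs <;> assumption

/-- The smallest element `[0; 4, 1, 4, 1, …]` of `F(4)`. -/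
noncomputable def hallMin : ℝ := cfVal (alternating 4 1)

/-- The largest element `[0; 1, 4, 1, 4, …]` of `F(4)`. -/
noncomputable def hallMax : ℝ := cfVal (alternating 1 4)

theorem inv_four_add_hallMax : (4 + hallMax)⁻¹ = hallMin := by
  rw [hallMin, cfVal_eq_inv, alternating_succ]
  rfl

theorem inv_one_add_hallMin : (1 + hallMin)⁻¹ = hallMax := by
  rw [hallMax, cfVal_eq_inv, alternating_succ, alternating, if_pos .zero, PNat.one_coe,
    Nat.cast_one, hallMin]

theorem hallMax_eq : hallMax = 4 * hallMin := by
  have hmin : 0 ≤ hallMin := (cfVal_mem_Icc _).1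
  have hmax : 0 ≤ hallMax := (cfVal_mem_Icc _).1
  have h₁ : hallMin * (4 + hallMax) = 1 := by
    rw [← inv_four_add_hallMax]; exact inv_mul_cancel₀ (by positivity)
  have h₂ : hallMax * (1 + hallMin) = 1 := by
    nth_rw 1 [← inv_one_add_hallMin]; exact inv_mul_cancel₀ (by positivity)
  linarith

theorem hallMin_mem_Icc : hallMin ∈ Icc (1 / 5 : ℝ) (1 / 4) := by
  have hmin : 0 ≤ hallMin := (cfVal_mem_Icc _).1
  have h : hallMin * (4 + 4 * hallMin) = 1 := by
    rw [← hallMax_eq]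
    nth_rw 1 [← inv_four_add_hallMax]
    exact inv_mul_cancel₀ (by rw [hallMax_eq]; positivity)
  constructor <;> nlinarith

/-- The numbers whose continued fraction starts with `w`, followed by a digit between `k` and `4`
and then by digits at most `4`; the gap separates the next digit `k` from the larger ones. -/
noncomputable def hallCell (w : List ℕ+) (k : ℕ+) : GappedInterval where
  left := cfSnoc w (k + hallMin)
  gapLeft := cfSnoc w (k + hallMax)
  gapRight := cfSnoc w (k + 1 + hallMin)
  right := cfSnoc w (4 + hallMax)

/-- Hall's dissection of `F(4)`. -/
def hallCells : Set GappedInterval :=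
  {c | ∃ w k, (∀ d ∈ w, d ≤ 4) ∧ k ≤ 3 ∧ (c = hallCell w k ∨ c = (hallCell w k).reverse)}

theorem cast_pnat_le_three {k : ℕ+} (hk : k ≤ 3) : (k : ℝ) ≤ 3 := by exact_mod_cast hk

variable {w : List ℕ+} {k : ℕ+}

theorem hallCell_mem (hw : ∀ d ∈ w, d ≤ 4) (hk : k ≤ 3) : hallCell w k ∈ hallCells :=
  ⟨w, k, hw, hk, .inl rfl⟩

theorem reverse_hallCell_mem (hw : ∀ d ∈ w, d ≤ 4) (hk : k ≤ 3) :
    (hallCell w k).reverse ∈ hallCells :=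
  ⟨w, k, hw, hk, .inr rfl⟩

theorem reverse_mem_hallCells {c : GappedInterval} (hc : c ∈ hallCells) :
    c.reverse ∈ hallCells := by
  obtain ⟨w, k, hw, hk, rfl | rfl⟩ := hc
  exacts [reverse_hallCell_mem hw hk, hallCell_mem hw hk]

theorem isOrdered_hallCell (w : List ℕ+) (hk : k ≤ 3) :
    (hallCell w k).IsOrdered ∨ (hallCell w k).reverse.IsOrdered := by
  have hk₁ := one_le_cast_pnat k
  have hk₃ := cast_pnat_le_three hk
  obtain ⟨hmin, hmax⟩ := hallMin_mem_Icc
  have h₁ : (k + hallMin : ℝ) ∈ Ioi 0 := by rw [mem_Ioi]; linarith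
  have h₂ : (k + hallMax : ℝ) ∈ Ioi 0 := by rw [mem_Ioi, hallMax_eq]; linarith
  have h₃ : (k + 1 + hallMin : ℝ) ∈ Ioi 0 := by rw [mem_Ioi]; linarith
  have h₄ : (4 + hallMax : ℝ) ∈ Ioi 0 := by rw [mem_Ioi, hallMax_eq]; linarith
  have h₁₂ : (k + hallMin : ℝ) < k + hallMax := by rw [hallMax_eq]; linarith
  have h₂₃ : (k + hallMax : ℝ) < k + 1 + hallMin := by rw [hallMax_eq]; linarith
  have h₃₄ : (k + 1 + hallMin : ℝ) < 4 + hallMax := by rw [hallMax_eq]; linarith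
  exact (cfSnoc_strictMonoOn_or_strictAntiOn w).imp
    (fun h ↦ ⟨h h₁ h₂ h₁₂, h h₂ h₃ h₂₃, h h₃ h₄ h₃₄⟩)
    fun h ↦ ⟨h h₃ h₄ h₃₄, h h₂ h₃ h₂₃, h h₁ h₂ h₁₂⟩

theorem gap_hallCell (w : List ℕ+) (k : ℕ+) :
    (hallCell w k).gap = |cfSnoc w (k + 1 + hallMin) - cfSnoc w (k + hallMax)| := rfl

theorem length_hallCell (w : List ℕ+) (k : ℕ+) :
    (hallCell w k).length = |cfSnoc w (4 + hallMax) - cfSnoc w (k + hallMin)| := rfl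

theorem gap_hallCell_le_left (w : List ℕ+) (k : ℕ+) :
    (hallCell w k).gap ≤ |cfSnoc w (k + hallMax) - cfSnoc w (k + hallMin)| := by
  have hk := one_le_cast_pnat k
  obtain ⟨hmin, hmax⟩ := hallMin_mem_Icc
  rw [gap_hallCell, ← one_mul |cfSnoc w (k + hallMax) - _|, hallMax_eq]
  refine abs_cfSnoc_sub_le w (by linarith) (by linarith) (by linarith) (by linarith)
    fun q q' hq hq' ↦ ?_
  rw [abs_of_pos (by linarith), abs_of_pos (by linarith), one_mul,
    mul_comm (q * (k + 4 * hallMin) + q')]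
  gcongr ?_ * ((q * ?_ + q') * (q * (k + 4 * hallMin) + q')) <;> linarith

theorem gap_hallCell_le_right (w : List ℕ+) (hk : k ≤ 3) :
    (hallCell w k).gap ≤ |cfSnoc w (4 + hallMax) - cfSnoc w (k + 1 + hallMin)| := by
  have hk₁ := one_le_cast_pnat k
  have hk₃ := cast_pnat_le_three hk
  obtain ⟨hmin, hmax⟩ := hallMin_mem_Icc
  rw [gap_hallCell, ← one_mul |cfSnoc w (4 + hallMax) - _|, hallMax_eq]
  refine abs_cfSnoc_sub_le w (by linarith) (by linarith) (by linarith) (by linarith)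
    fun q q' hq hq' ↦ ?_
  rw [abs_of_pos (by linarith), abs_of_pos (by linarith), one_mul]
  have coeff : (1 - 3 * hallMin) * (4 + 4 * hallMin) ≤
      (3 + 3 * hallMin - k) * (k + 4 * hallMin) := by
    nlinarith [mul_nonneg (sub_nonneg.2 hk₁) (sub_nonneg.2 hk₃)]
  have coeff' : 1 - 3 * hallMin ≤ 3 + 3 * hallMin - k := by linarith
  have : 0 ≤ q * (k + 1 + hallMin) + q' := by positivity
  calc (k + 1 + hallMin - (k + 4 * hallMin)) *
        ((q * (4 + 4 * hallMin) + q') * (q * (k + 1 + hallMin) + q'))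
      = (q * ((1 - 3 * hallMin) * (4 + 4 * hallMin)) + (1 - 3 * hallMin) * q') *
          (q * (k + 1 + hallMin) + q') := by ring
    _ ≤ (q * ((3 + 3 * hallMin - k) * (k + 4 * hallMin)) + (3 + 3 * hallMin - k) * q') *
          (q * (k + 1 + hallMin) + q') := by gcongr
    _ = (4 + 4 * hallMin - (k + 1 + hallMin)) *
          ((q * (k + 1 + hallMin) + q') * (q * (k + 4 * hallMin) + q')) := by ring

theorem gap_hallCell_succ_le (w : List ℕ+) (k : ℕ+) :
    (hallCell w (k + 1)).gap ≤ (hallCell w k).gap := by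
  have hk := one_le_cast_pnat k
  obtain ⟨hmin, hmax⟩ := hallMin_mem_Icc
  rw [gap_hallCell, gap_hallCell, ← one_mul |cfSnoc w (k + 1 + hallMin) - _|, hallMax_eq,
    PNat.add_coe, PNat.one_coe, Nat.cast_add, Nat.cast_one]
  refine abs_cfSnoc_sub_le w (by linarith) (by linarith) (by linarith) (by linarith)
    fun q q' hq hq' ↦ ?_
  rw [abs_of_pos (by linarith), abs_of_pos (by linarith), one_mul]
  gcongr ?_ * ((q * ?_ + q') * (q * ?_ + q')) <;> linarith

theorem denom_le_mul_denom_inv {d x q q' : ℝ} (hd : 1 ≤ d) (hx : 0 ≤ x) (hq : 0 ≤ q)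
    (hq' : 0 ≤ q') : q * (d + x) + q' ≤ (1 + x) * (q * (d + (1 + x)⁻¹) + q') := by
  calc q * (d + x) + q' ≤ q * (d * (1 + x) + 1) + (1 + x) * q' :=
      add_le_add (mul_le_mul_of_nonneg_left (by nlinarith) hq) (by nlinarith)
    _ = (1 + x) * (q * (d + (1 + x)⁻¹) + q') := by field_simp

theorem gap_hallCell_append_le (w : List ℕ+) (k : ℕ+) :
    (hallCell (w ++ [k]) 1).gap ≤ (hallCell w k).gap := by
  have hk := one_le_cast_pnat k
  obtain ⟨hmin, hmax⟩ := hallMin_mem_Icc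
  rw [gap_hallCell, gap_hallCell, ← one_mul |cfSnoc w (k + 1 + hallMin) - _|, hallMax_eq,
    cfSnoc_append_singleton, cfSnoc_append_singleton, PNat.one_coe, Nat.cast_one, add_assoc (k : ℝ),
    add_assoc 1]
  refine abs_cfSnoc_sub_le w (by positivity) (by positivity) (by positivity) (by positivity)
    fun q q' hq hq' ↦ ?_
  have hsub : (k + (1 + (1 + hallMin))⁻¹ : ℝ) - (k + (1 + 4 * hallMin)⁻¹) =
      -(1 - 3 * hallMin) / ((1 + (1 + hallMin)) * (1 + 4 * hallMin)) := by field_simp; ring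
  have hpos : 0 < 1 - 3 * hallMin := by linarith
  rw [hsub, abs_div, abs_neg, abs_of_pos hpos, abs_of_pos (by positivity : (0 : ℝ) < _ * _),
    abs_of_pos (by linarith), one_mul, div_mul_eq_mul_div, div_le_iff₀ (by positivity)]
  calc (1 - 3 * hallMin) * ((q * (k + (1 + hallMin)) + q') * (q * (k + 4 * hallMin) + q'))
      ≤ (1 - 3 * hallMin) * (((1 + (1 + hallMin)) * (q * (k + (1 + (1 + hallMin))⁻¹) + q')) *
          ((1 + 4 * hallMin) * (q * (k + (1 + 4 * hallMin)⁻¹) + q'))) := by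
        gcongr _ * (?_ * ?_) <;>
          exact denom_le_mul_denom_inv hk (by positivity) hq.le hq'
    _ = _ := by ring

theorem length_hallCell_le (w : List ℕ+) (hk : k ≤ 3) :
    (hallCell w k).length ≤ 30 * (hallCell w k).gap := by
  have hk₁ := one_le_cast_pnat k
  have hk₃ := cast_pnat_le_three hk
  obtain ⟨hmin, hmax⟩ := hallMin_mem_Icc
  rw [gap_hallCell, length_hallCell, hallMax_eq]
  refine abs_cfSnoc_sub_le w (by linarith) (by linarith) (by linarith) (by linarith)
    fun q q' hq hq' ↦ ?_
  rw [abs_of_pos (by linarith), abs_of_pos (by linarith)]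
  have hnear : q * (k + 1 + hallMin) + q' ≤ 2 * (q * (k + hallMin) + q') := by nlinarith
  calc (4 + 4 * hallMin - (k + hallMin)) *
        ((q * (k + 1 + hallMin) + q') * (q * (k + 4 * hallMin) + q'))
      ≤ 15 / 4 * (2 * (q * (k + hallMin) + q') * (q * (4 + 4 * hallMin) + q')) := by
        gcongr <;> linarith
    _ = 30 * (1 / 4) * ((q * (4 + 4 * hallMin) + q') * (q * (k + hallMin) + q')) := by ring
    _ ≤ 30 * (k + 1 + hallMin - (k + 4 * hallMin)) *
          ((q * (4 + 4 * hallMin) + q') * (q * (k + hallMin) + q')) := by gcongr; linarith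

theorem hallCell_append_left (w : List ℕ+) (k : ℕ+) :
    (hallCell (w ++ [k]) 1).left = cfSnoc w (k + hallMax) := by
  rw [hallCell, cfSnoc_append_singleton, PNat.one_coe, Nat.cast_one, inv_one_add_hallMin]

theorem hallCell_append_right (w : List ℕ+) (k : ℕ+) :
    (hallCell (w ++ [k]) 1).right = cfSnoc w (k + hallMin) := by
  simp only [hallCell, cfSnoc_append_singleton, inv_four_add_hallMax]

theorem forall_mem_append_le (hw : ∀ d ∈ w, d ≤ 4) (hk : k ≤ 4) : ∀ d ∈ w ++ [k], d ≤ 4 := by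
  simpa [or_imp, forall_and] using ⟨hw, hk⟩

theorem exists_left_hallCell (hw : ∀ d ∈ w, d ≤ 4) (hk : k ≤ 3) :
    ∃ e ∈ hallCells, e.left = (hallCell w k).left ∧ e.right = (hallCell w k).gapLeft ∧
      e.gap ≤ (hallCell w k).gap := by
  refine ⟨(hallCell (w ++ [k]) 1).reverse, reverse_hallCell_mem
    (forall_mem_append_le hw (hk.trans (by decide))) (by decide), hallCell_append_right w k,
    hallCell_append_left w k, ?_⟩
  rw [GappedInterval.gap_reverse]
  exact gap_hallCell_append_le w k

theorem exists_right_hallCell (hw : ∀ d ∈ w, d ≤ 4) (hk : k ≤ 3) :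
    ∃ e ∈ hallCells, e.left = (hallCell w k).gapRight ∧ e.right = (hallCell w k).right ∧
      e.gap ≤ (hallCell w k).gap := by
  obtain hlt | rfl := hk.lt_or_eq
  · refine ⟨hallCell w (k + 1), hallCell_mem hw (PNat.add_one_le_iff.2 hlt), ?_, rfl,
      gap_hallCell_succ_le w k⟩
    simp [hallCell]
  · refine ⟨(hallCell (w ++ [4]) 1).reverse, reverse_hallCell_mem
      (forall_mem_append_le hw le_rfl) (by decide), ?_, hallCell_append_left w 4, ?_⟩
    · exact (hallCell_append_right w 4).trans (by norm_num [hallCell])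
    · rw [GappedInterval.gap_reverse]
      exact (gap_hallCell_append_le w 4).trans (gap_hallCell_succ_le w 3)

theorem hallMin_mem_boundedCF : hallMin ∈ boundedCF 4 :=
  cfVal_alternating_mem_boundedCF le_rfl (by decide)

theorem hallMax_mem_boundedCF : hallMax ∈ boundedCF 4 :=
  cfVal_alternating_mem_boundedCF (by decide) le_rfl

theorem cfSnoc_add_mem_boundedCF {m : ℕ+} (hw : ∀ d ∈ w, d ≤ m) (hk : k ≤ m) {x : ℝ}
    (hx : x ∈ boundedCF m) : cfSnoc w (k + x) ∈ boundedCF m :=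
  cfBranch_mem_boundedCF hw (inv_add_mem_boundedCF hk hx)

theorem isDissection_hallCells : IsDissection hallCells (boundedCF 4) 30 where
  reverse_mem _ := reverse_mem_hallCells
  isOrdered := by
    rintro _ ⟨w, k, -, hk, rfl | rfl⟩
    exacts [isOrdered_hallCell w hk, (isOrdered_hallCell w hk).symm]
  gap_le_left := by
    rintro _ ⟨w, k, -, hk, rfl | rfl⟩
    · exact gap_hallCell_le_left w k
    · rw [GappedInterval.gap_reverse]
      exact (gap_hallCell_le_right w hk).trans_eq (abs_sub_comm _ _)
  length_le := by
    rintro _ ⟨w, k, -, hk, rfl | rfl⟩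
    · exact length_hallCell_le w hk
    · rw [GappedInterval.length_reverse, GappedInterval.gap_reverse]
      exact length_hallCell_le w hk
  left_mem := by
    rintro _ ⟨w, k, hw, hk, rfl | rfl⟩
    · exact cfSnoc_add_mem_boundedCF hw (hk.trans (by decide)) hallMin_mem_boundedCF
    · exact cfSnoc_add_mem_boundedCF (k := 4) hw le_rfl hallMax_mem_boundedCF
  exists_left := by
    rintro _ ⟨w, k, hw, hk, rfl | rfl⟩
    · exact exists_left_hallCell hw hk
    · obtain ⟨e, he, hleft, hright, hgap⟩ := exists_right_hallCell hw hk
      refine ⟨e.reverse, reverse_mem_hallCells he, hright, hleft, ?_⟩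
      rwa [e.gap_reverse, GappedInterval.gap_reverse]

theorem Icc_subset_boundedCF_add_boundedCF :
    Icc (hallMin + hallMin) (hallMax + hallMax) ⊆ boundedCF 4 + boundedCF 4 := by
  have hleft : (hallCell [] 1).reverse.left = hallMin := by
    simp [GappedInterval.reverse, hallCell, cfSnoc, cfBranch, inv_four_add_hallMax]
  have hright : (hallCell [] 1).reverse.right = hallMax := by
    simp [GappedInterval.reverse, hallCell, cfSnoc, cfBranch, inv_one_add_hallMin]
  have hle : hallMin ≤ hallMax := by
    rw [hallMax_eq]
    linarith [hallMin_mem_Icc.1]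
  have hroot : (hallCell [] 1).reverse ∈ hallCells := reverse_hallCell_mem (by simp) (by decide)
  rw [← hleft, ← hright] at hle ⊢
  exact isDissection_hallCells.Icc_subset_add (isCompact_boundedCF 4) hroot hle

end HallDissection

section PerronFormula

open Filter Topology Set

/-- The denominators of the convergents, shifted so that `cfDen a (n + 1)` is the denominator of
`[0; a₀, …, aₙ₋₁]`. -/
def cfDen (a : ℕ → ℕ+) : ℕ → ℕ
  | 0 => 0
  | 1 => 1
  | n + 2 => a n * cfDen a (n + 1) + cfDen a n

/-- The numerators of the convergents, shifted so that `cfNum a (n + 1)` is the numerator of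
`[0; a₀, …, aₙ₋₁]`. -/
def cfNum (a : ℕ → ℕ+) : ℕ → ℕ
  | 0 => 1
  | 1 => 0
  | n + 2 => a n * cfNum a (n + 1) + cfNum a n

theorem cfDen_add_two (a : ℕ → ℕ+) (n : ℕ) :
    cfDen a (n + 2) = a n * cfDen a (n + 1) + cfDen a n := rfl

theorem cfNum_mul_cfDen_sub (a : ℕ → ℕ+) (n : ℕ) :
    (cfNum a n * cfDen a (n + 1) - cfNum a (n + 1) * cfDen a n : ℤ) = (-1) ^ n := by
  induction n with
  | zero => simp [cfNum, cfDen]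
  | succ n ih =>
    rw [pow_succ, ← ih, cfDen, cfNum]
    push_cast
    ring

theorem exists_eq_mul_cfDen_add (a : ℕ → ℕ+) (n : ℕ) (p q : ℤ) :
    ∃ x y : ℤ, q = x * cfDen a n + y * cfDen a (n + 1) ∧
      p = x * cfNum a n + y * cfNum a (n + 1) := by
  have hdet := cfNum_mul_cfDen_sub a n
  have hsq : ((-1) ^ n * (-1) ^ n : ℤ) = 1 := by rw [← mul_pow]; simp
  refine ⟨(-1) ^ n * (p * cfDen a (n + 1) - q * cfNum a (n + 1)),
    (-1) ^ n * (q * cfNum a n - p * cfDen a n), ?_, ?_⟩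
  · linear_combination (-1) ^ n * q * -hdet - q * hsq
  · linear_combination (-1) ^ n * p * -hdet - p * hsq

theorem cfDen_le_succ (a : ℕ → ℕ+) (n : ℕ) : cfDen a n ≤ cfDen a (n + 1) := by
  cases n with
  | zero => simp [cfDen]
  | succ n =>
    rw [cfDen_add_two]
    exact (Nat.le_mul_of_pos_left _ (a n).pos).trans (Nat.le_add_right _ _)

theorem monotone_cfDen (a : ℕ → ℕ+) : Monotone (cfDen a) :=
  monotone_nat_of_le_succ (cfDen_le_succ a)

theorem cfDen_succ_pos (a : ℕ → ℕ+) (n : ℕ) : 0 < cfDen a (n + 1) :=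
  Nat.one_pos.trans_le (monotone_cfDen a (Nat.le_add_left 1 n))

theorem fib_le_cfDen (a : ℕ → ℕ+) : ∀ n, Nat.fib n ≤ cfDen a n
  | 0 => le_rfl
  | 1 => le_rfl
  | n + 2 => by
    rw [Nat.fib_add_two, cfDen_add_two, add_comm]
    exact add_le_add ((fib_le_cfDen a (n + 1)).trans (Nat.le_mul_of_pos_left _ (a n).pos))
      (fib_le_cfDen a n)

theorem lt_cfDen_add_two (a : ℕ → ℕ+) (n : ℕ) : n < cfDen a (n + 2) := by
  have := Nat.le_fib_add_one (n + 2)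
  have := fib_le_cfDen a (n + 2)
  lia

/-- The error `qₙα - pₙ` of the convergent `pₙ / qₙ`, with the index shift of `cfDen`. -/
noncomputable def cfError (a : ℕ → ℕ+) (n : ℕ) : ℝ := cfDen a n * cfVal a - cfNum a n

theorem cfTail_mul (a : ℕ → ℕ+) (n : ℕ) : cfTail a n * (a n + cfTail a (n + 1)) = 1 := by
  have := (cfTail_mem_Icc a (n + 1)).1
  rw [cfTail_eq_inv]
  exact inv_mul_cancel₀ (by positivity)

theorem cfError_succ (a : ℕ → ℕ+) (n : ℕ) : cfError a (n + 1) = -(cfTail a n * cfError a n) := by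
  induction n with
  | zero => simp [cfError, cfDen, cfNum, cfTail_zero]
  | succ n ih =>
    have hrec : cfError a (n + 2) = a n * cfError a (n + 1) + cfError a n := by
      simp only [cfError, cfDen, cfNum]
      push_cast
      ring
    linear_combination hrec + (a n + cfTail a (n + 1)) * ih - cfError a n * cfTail_mul a n

theorem abs_cfError_mul (a : ℕ → ℕ+) (n : ℕ) :
    |cfError a n| * (cfDen a (n + 1) + cfTail a n * cfDen a n) = 1 := by
  induction n with
  | zero => simp [cfError, cfDen, cfNum]
  | succ n ih =>
    rw [cfError_succ, abs_neg, abs_mul, abs_of_nonneg (cfTail_mem_Icc a n).1, cfDen]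
    push_cast
    linear_combination ih + |cfError a n| * cfDen a (n + 1) * cfTail_mul a n

theorem abs_cfError_pos (a : ℕ → ℕ+) (n : ℕ) : 0 < |cfError a n| :=
  (abs_nonneg _).lt_of_ne fun h ↦ by simpa [← h] using abs_cfError_mul a n

theorem opposite_signs_of_pos_of_lt {x y d d' : ℤ} (hd : 0 ≤ d) (hpos : 0 < x * d + y * d')
    (hlt : x * d + y * d' < d') : 1 ≤ x ∧ y ≤ 0 ∨ x ≤ -1 ∧ 0 ≤ y := by
  have : 0 < d' := hpos.trans hlt
  obtain hy | rfl | hy := lt_trichotomy y 0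
  · refine .inl ⟨?_, hy.le⟩
    by_contra! hx
    nlinarith
  · refine .inl ⟨?_, le_rfl⟩
    by_contra! hx
    nlinarith
  · refine .inr ⟨?_, hy.le⟩
    by_contra! hx
    nlinarith

theorem abs_cfError_le (a : ℕ → ℕ+) {n q : ℕ} (hq : 0 < q) (hlt : q < cfDen a (n + 1)) (p : ℤ) :
    |cfError a n| ≤ |q * cfVal a - p| := by
  obtain ⟨x, y, hqxy, rfl⟩ := exists_eq_mul_cfDen_add a n p q
  have hsplit : (q * cfVal a - (x * cfNum a n + y * cfNum a (n + 1) : ℤ) : ℝ) =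
      (x - y * cfTail a n) * cfError a n := by
    have hqxy' : (q : ℝ) = x * cfDen a n + y * cfDen a (n + 1) := by exact_mod_cast hqxy
    have := cfError_succ a n
    simp only [cfError] at this ⊢
    push_cast
    linear_combination cfVal a * hqxy' + y * this
  have hcoeff : 1 ≤ |x - y * cfTail a n| := by
    have htail := (cfTail_mem_Icc a n).1
    obtain ⟨hx, hy⟩ | ⟨hx, hy⟩ := opposite_signs_of_pos_of_lt (Int.natCast_nonneg (cfDen a n))
      (hqxy ▸ Int.natCast_pos.2 hq) (hqxy ▸ Int.ofNat_lt.2 hlt)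
    · have hx' : (1 : ℝ) ≤ x := by exact_mod_cast hx
      have hy' : (y : ℝ) ≤ 0 := by exact_mod_cast hy
      exact le_abs.2 (.inl (by nlinarith))
    · have hx' : (x : ℝ) ≤ -1 := by exact_mod_cast hx
      have hy' : (0 : ℝ) ≤ y := by exact_mod_cast hy
      exact le_abs.2 (.inr (by nlinarith))
  rw [hsplit, abs_mul]
  exact le_mul_of_one_le_left (abs_nonneg _) hcoeff

theorem irrational_cfVal (a : ℕ → ℕ+) : Irrational (cfVal a) := by
  rintro ⟨r, hr⟩
  have hle : |cfError a (r.den + 1)| ≤ |r.den * cfVal a - r.num| :=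
    abs_cfError_le a r.pos (lt_cfDen_add_two a r.den) r.num
  have hzero : r.den * cfVal a - r.num = 0 := by
    rw [← hr, sub_eq_zero]
    exact_mod_cast r.den_mul_eq_num
  rw [hzero, abs_zero] at hle
  exact hle.not_gt (abs_cfError_pos a _)

/-- The ratio `qₙ₋₁ / qₙ = [0; aₙ₋₁, …, a₀]` of consecutive denominators. -/
noncomputable def cfBack (a : ℕ → ℕ+) (n : ℕ) : ℝ := cfDen a n / cfDen a (n + 1)

theorem cfBack_mem_Icc (a : ℕ → ℕ+) (n : ℕ) : cfBack a n ∈ Icc (0 : ℝ) 1 :=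
  ⟨by unfold cfBack; positivity,
    div_le_one_of_le₀ (by exact_mod_cast cfDen_le_succ a n) (by positivity)⟩

theorem cfBack_succ (a : ℕ → ℕ+) (n : ℕ) : cfBack a (n + 1) = ((a n : ℝ) + cfBack a n)⁻¹ := by
  have := cfDen_succ_pos a n
  rw [cfBack, cfBack, cfDen_add_two]
  push_cast
  field_simp

/-- The approximation constant `[aₙ; aₙ₊₁, …] + [0; aₙ₋₁, …, a₀]` of the `n`-th convergent. -/
noncomputable def perron (a : ℕ → ℕ+) (n : ℕ) : ℝ := a n + cfTail a (n + 1) + cfBack a n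

theorem perron_eq (a : ℕ → ℕ+) (n : ℕ) :
    perron a n = 1 / (cfDen a (n + 1) * |cfError a (n + 1)|) := by
  have hpos := abs_cfError_pos a (n + 1)
  have hden := cfDen_succ_pos a n
  have h := abs_cfError_mul a (n + 1)
  rw [cfDen_add_two] at h
  push_cast at h
  rw [perron, cfBack]
  field_simp
  linear_combination h

theorem distNearestInt_le (x : ℝ) (n : ℤ) : distNearestInt x ≤ |x - n| := round_le x n

theorem distNearestInt_pos_s9 {x : ℝ} (hx : Irrational x) : 0 < distNearestInt x :=
  abs_pos.2 (sub_ne_zero.2 (hx.ne_int _))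

theorem perron_le (a : ℕ → ℕ+) (n : ℕ) :
    perron a n ≤ 1 / (cfDen a (n + 1) * distNearestInt (cfDen a (n + 1) * cfVal a)) := by
  have hden := cfDen_succ_pos a n
  have hpos : 0 < distNearestInt (cfDen a (n + 1) * cfVal a) :=
    distNearestInt_pos_s9 ((irrational_cfVal a).natCast_mul hden.ne')
  rw [perron_eq]
  gcongr
  exact_mod_cast distNearestInt_le _ (cfNum a (n + 1))

theorem le_perron (a : ℕ → ℕ+) {n q : ℕ} (hle : cfDen a (n + 1) ≤ q) (hlt : q < cfDen a (n + 2)) :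
    1 / (q * distNearestInt (q * cfVal a)) ≤ perron a n := by
  have hden := cfDen_succ_pos a n
  have hpos := abs_cfError_pos a (n + 1)
  rw [perron_eq]
  gcongr
  exact abs_cfError_le a (hden.trans_le hle) hlt _

theorem exists_cfDen_le_lt (a : ℕ → ℕ+) {q : ℕ} (hq : 0 < q) :
    ∃ n, cfDen a (n + 1) ≤ q ∧ q < cfDen a (n + 2) := by
  classical
  have hex : ∃ n, q < cfDen a (n + 2) := ⟨q, lt_cfDen_add_two a q⟩
  refine ⟨Nat.find hex, ?_, Nat.find_spec hex⟩
  obtain h | h := (Nat.find hex).eq_zero_or_pos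
  · rwa [h]
  · obtain ⟨n, hn⟩ := Nat.exists_eq_add_one.2 h
    rw [hn]
    exact not_lt.1 (Nat.find_min hex (hn ▸ Nat.lt_succ_self n))

theorem tendsto_cfDen_succ (a : ℕ → ℕ+) : Tendsto (fun n ↦ cfDen a (n + 1)) atTop atTop :=
  (tendsto_add_atTop_iff_nat 1).1 <|
    tendsto_atTop_mono (fun n ↦ (lt_cfDen_add_two a n).le) tendsto_id

theorem tendsto_of_lt_cfDen (a : ℕ → ℕ+) {i : ℕ → ℕ} (hi : ∀ q > 0, q < cfDen a (i q + 2)) :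
    Tendsto i atTop atTop := by
  refine tendsto_atTop.2 fun m ↦ ?_
  filter_upwards [eventually_ge_atTop (cfDen a (m + 2)), eventually_gt_atTop 0] with q hq hpos
  by_contra! hlt
  exact ((hi q hpos).trans_le (monotone_cfDen a (by lia))).not_ge hq

/-- **Perron's formula**. -/
theorem lagrangeVal_cfVal (a : ℕ → ℕ+) :
    lagrangeVal (cfVal a) = limsup (fun n ↦ ENNReal.ofReal (perron a n)) atTop := by
  let v (q : ℕ) : ℝ≥0∞ := ENNReal.ofReal (1 / (q * distNearestInt (q * cfVal a)))
  let P (n : ℕ) : ℝ≥0∞ := ENNReal.ofReal (perron a n)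
  choose! i hile hilt using fun q (hq : q > 0) ↦ exists_cfDen_le_lt a hq
  have hv : v ≤ᶠ[atTop] P ∘ i := by
    filter_upwards [eventually_gt_atTop 0] with q hq
    exact ENNReal.ofReal_le_ofReal (le_perron a (hile q hq) (hilt q hq))
  have hP : P ≤ᶠ[atTop] v ∘ fun n ↦ cfDen a (n + 1) :=
    .of_forall fun n ↦ ENNReal.ofReal_le_ofReal (perron_le a n)
  change limsup v atTop = limsup P atTop
  exact le_antisymm
    ((limsup_le_limsup hv).trans (tendsto_of_lt_cfDen a hilt).limsup_comp_le_limsup)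
    ((limsup_le_limsup hP).trans (tendsto_cfDen_succ a).limsup_comp_le_limsup)

end PerronFormula

section BlockSequence

open Filter Topology Set

/-- The concatenation of the blocks `cₖ₋₁, …, c₀, N, b₀, …, bₖ₋₁` for `k = 0, 1, 2, …`. The block
with index `k` occupies the positions `k ^ 2, …, k ^ 2 + 2 * k`. -/
def blockSeq {α : Type*} (N : α) (b c : ℕ → α) (i : ℕ) : α :=
  let m := i.sqrt * i.sqrt + i.sqrt
  if i = m then N else if m < i then b (i - m - 1) else c (m - i - 1)

theorem blockSeq_center {α : Type*} (N : α) (b c : ℕ → α) (k : ℕ) :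
    blockSeq N b c (k * k + k) = N := by
  simp [blockSeq, Nat.sqrt_add_eq k (show k ≤ k + k by lia)]

theorem blockSeq_right {α : Type*} (N : α) (b c : ℕ → α) {k j : ℕ} (hj : j < k) :
    blockSeq N b c (k * k + k + 1 + j) = b j := by
  have hsqrt : Nat.sqrt (k * k + k + 1 + j) = k := by
    rw [add_assoc, add_assoc]
    exact Nat.sqrt_add_eq k (by lia)
  simp only [blockSeq, hsqrt]
  rw [if_neg (by lia), if_pos (by lia)]
  congr 1
  lia

theorem blockSeq_left {α : Type*} (N : α) (b c : ℕ → α) {k j : ℕ} (hj : j < k) :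
    blockSeq N b c (k * k + k - (j + 1)) = c j := by
  have hsqrt : Nat.sqrt (k * k + k - (j + 1)) = k := by
    rw [Nat.add_sub_assoc hj]
    exact Nat.sqrt_add_eq k (by lia)
  simp only [blockSeq, hsqrt]
  rw [if_neg (by lia), if_neg (by lia)]
  congr 1
  lia

theorem blockSeq_le {α : Type*} [LE α] {m : α} (N : α) {b c : ℕ → α} (hb : ∀ n, b n ≤ m)
    (hc : ∀ n, c n ≤ m) {i : ℕ} (hi : i ≠ i.sqrt * i.sqrt + i.sqrt) : blockSeq N b c i ≤ m := by
  simp only [blockSeq, if_neg hi]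
  split_ifs
  exacts [hb _, hc _]

theorem abs_perron_blockSeq_sub_le (N : ℕ+) (b c : ℕ → ℕ+) (k : ℕ) :
    |perron (blockSeq N b c) (k * k + k) - (N + cfVal b + cfVal c)| ≤ 4 * (1 / 2) ^ k := by
  set a := blockSeq N b c with ha
  have hright : |cfTail a (k * k + k + 1) - cfVal b| ≤ 2 * (1 / 2) ^ k :=
    abs_sub_cfVal_le (y := fun j ↦ cfTail a (k * k + k + 1 + j))
      (fun j hj ↦ by rw [cfTail_eq_inv, ha, blockSeq_right N b c hj]; rfl) (cfTail_mem_Icc _ _)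
  have hleft : |cfBack a (k * k + k) - cfVal c| ≤ 2 * (1 / 2) ^ k := by
    refine abs_sub_cfVal_le (y := fun j ↦ cfBack a (k * k + k - j)) (fun j hj ↦ ?_)
      (cfBack_mem_Icc _ _)
    have hsucc : k * k + k - j = k * k + k - (j + 1) + 1 := by lia
    rw [hsucc, cfBack_succ, ha, blockSeq_left N b c hj]
  calc |perron a (k * k + k) - (N + cfVal b + cfVal c)|
      = |(cfTail a (k * k + k + 1) - cfVal b) + (cfBack a (k * k + k) - cfVal c)| := by
        rw [perron, ha, blockSeq_center]
        ring_nf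
    _ ≤ 2 * (1 / 2) ^ k + 2 * (1 / 2) ^ k := (abs_add_le _ _).trans (add_le_add hright hleft)
    _ = 4 * (1 / 2) ^ k := by ring

theorem perron_le_add_two (a : ℕ → ℕ+) (n : ℕ) : perron a n ≤ a n + 2 := by
  rw [perron]
  linarith [(cfTail_mem_Icc a (n + 1)).2, (cfBack_mem_Icc a n).2]

theorem limsup_ofReal_eq {u v : ℕ → ℝ} {φ : ℕ → ℕ} {t : ℝ} (huv : ∀ n, u n ≤ v n)
    (hv : Tendsto v atTop (𝓝 t)) (hφ : Tendsto φ atTop atTop)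
    (hu : Tendsto (u ∘ φ) atTop (𝓝 t)) :
    limsup (fun n ↦ ENNReal.ofReal (u n)) atTop = ENNReal.ofReal t := by
  refine le_antisymm ?_ ?_
  · calc limsup (fun n ↦ ENNReal.ofReal (u n)) atTop
      _ ≤ limsup (fun n ↦ ENNReal.ofReal (v n)) atTop :=
        limsup_le_limsup (.of_forall fun n ↦ ENNReal.ofReal_le_ofReal (huv n))
      _ = ENNReal.ofReal t := (ENNReal.tendsto_ofReal hv).limsup_eq
  · rw [← (ENNReal.tendsto_ofReal hu).limsup_eq]
    exact hφ.limsup_comp_le_limsup (u := fun n ↦ ENNReal.ofReal (u n))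

theorem limsup_perron_blockSeq {N m : ℕ+} {b c : ℕ → ℕ+} (hb : ∀ n, b n ≤ m)
    (hc : ∀ n, c n ≤ m) (ht : m + 2 ≤ N + cfVal b + cfVal c) :
    limsup (fun n ↦ ENNReal.ofReal (perron (blockSeq N b c) n)) atTop =
      ENNReal.ofReal (N + cfVal b + cfVal c) := by
  set t : ℝ := N + cfVal b + cfVal c
  have hpow := tendsto_const_mul_half_pow 4
  have hsqrt : Tendsto Nat.sqrt atTop atTop :=
    tendsto_atTop.2 fun k ↦ (eventually_ge_atTop (k * k)).mono fun _ ↦ Nat.le_sqrt.2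
  have hcenter : Tendsto (fun k : ℕ ↦ k * k + k) atTop atTop :=
    tendsto_atTop_mono (fun k ↦ Nat.le_add_left k (k * k)) tendsto_id
  have hle (n : ℕ) : perron (blockSeq N b c) n ≤ t + 4 * (1 / 2) ^ n.sqrt := by
    obtain hn | hn := eq_or_ne n (n.sqrt * n.sqrt + n.sqrt)
    · have := (abs_le.1 (abs_perron_blockSeq_sub_le N b c n.sqrt)).2
      rw [← hn] at this
      linarith
    · have hdigit : ((blockSeq N b c n : ℕ+) : ℝ) ≤ m := by exact_mod_cast blockSeq_le N hb hc hn
      have : (0 : ℝ) ≤ 4 * (1 / 2) ^ n.sqrt := by positivity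
      linarith [perron_le_add_two (blockSeq N b c) n]
  refine limsup_ofReal_eq hle (by simpa using (hpow.comp hsqrt).const_add t) hcenter ?_
  exact tendsto_iff_dist_tendsto_zero.2 <|
    squeeze_zero (fun _ ↦ dist_nonneg) (abs_perron_blockSeq_sub_le N b c) hpow

theorem add_mem_lagrangeSpectrum {N m : ℕ+} {x y : ℝ} (hx : x ∈ boundedCF m)
    (hy : y ∈ boundedCF m) (h : m + 2 ≤ N + x + y) : N + x + y ∈ LagrangeSpectrum := by
  obtain ⟨b, hb, rfl⟩ := hx
  obtain ⟨c, hc, rfl⟩ := hy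
  have hval := (lagrangeVal_cfVal _).trans (limsup_perron_blockSeq hb hc h)
  refine ⟨_, irrational_cfVal _, hval ▸ ENNReal.ofReal_ne_top, ?_⟩
  rw [hval, ENNReal.toReal_ofReal (le_trans (by positivity) h)]

end BlockSequence

/-- **Hall's ray**: every real `t ≥ 6` belongs to the Lagrange spectrum, i.e. there is an
irrational `α` with `ℓ(α) = t`; thus `[6, ∞) ⊆ L`. -/
theorem hall_ray : Set.Ici (6 : ℝ) ⊆ LagrangeSpectrum := by
  intro t (ht : 6 ≤ t)
  obtain ⟨hmin, hmax⟩ := hallMin_mem_Icc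
  have hN : 0 < ⌊t - 2 * hallMin⌋₊ := Nat.floor_pos.2 (by linarith)
  have hfloor := Nat.floor_le (by linarith : 0 ≤ t - 2 * hallMin)
  have hfloor' := Nat.lt_floor_add_one (t - 2 * hallMin)
  have hmem : t - ⌊t - 2 * hallMin⌋₊ ∈ Set.Icc (hallMin + hallMin) (hallMax + hallMax) := by
    rw [hallMax_eq]
    constructor <;> linarith
  obtain ⟨x, hx, y, hy, hxy⟩ := Icc_subset_boundedCF_add_boundedCF hmem
  have hsum : ⌊t - 2 * hallMin⌋₊ + x + y = t := by linarith
  have hspec := add_mem_lagrangeSpectrum (N := ⟨_, hN⟩) hx hy (by norm_num; linarith)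
  rwa [PNat.mk_coe, hsum] at hspec
end
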